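/- arXiv:1910.09714 — 2 statements merged into one kernel-verified Lean document; each statement's English description precedes it below -/
import Mathlib

section
/- Let d ≥ 1, p ∈ ℕ, 0 < ρ̲ ≤ ρ̄, L > 0 and 0 < β ≤ p + 1. There exists L₀ > 0, depending only on p, d, ρ̲, ρ̄ and L, with the following property. Let U ⊆ ℝ^d be a closed axis-parallel cube of side length s > 0, let ρ : U → ℝ be measurable with ρ̲ ≤ ρ(u) ≤ ρ̄ for all u ∈ U, let 0 < h ≤ s, and let f belong to the Hölder class H_U(β, L). Then for every x ∈ U and every polynomial g of total degree at most p in d variables that minimizes q ↦ ∫_U (f(u) − q(u))² · 1{‖x − u‖_∞ ≤ h} · ρ(u) du over polynomials of total degree at most p, one has |g(x) − f(x)| ≤ L₀ · h^β. -/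
open MeasureTheory

/-! The projection is near-optimal in sup norm: if some polynomial `T` of degree at most `p` is
within `E` of `f` on `U ∩ {‖x - u‖ ≤ h}`, then minimality of `g` bounds the weighted `L²` norm of
`g - T` by twice that of `f - T`, hence by a multiple of `E * h ^ (d / 2)`. Now `x` lies in a cube
of side `h` inside the window, and on the unit cube all norms on polynomials of degree at most `p`
are equivalent, so rescaling turns the `L²` bound into `|g x - T x| ≤ const * E`. For Hölder `f`
take `T` to be the Taylor polynomial at `x`, with `E = L * h ^ β`. -/

section Substitution

variable {R σ : Type*} [CommSemiring R]

/-- Substitution of the affine map `t ↦ a + h • t` into a polynomial. -/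
noncomputable def affineSubst (a : σ → R) (h : R) : MvPolynomial σ R →ₐ[R] MvPolynomial σ R :=
  MvPolynomial.aeval fun i => MvPolynomial.C (a i) + MvPolynomial.C h * MvPolynomial.X i

lemma eval_affineSubst (a : σ → R) (h : R) (q : MvPolynomial σ R) (t : σ → R) :
    MvPolynomial.eval t (affineSubst a h q) = MvPolynomial.eval (a + h • t) q := by
  rw [affineSubst, ← MvPolynomial.coe_aeval_eq_eval, RingHom.coe_coe,
    MvPolynomial.comp_aeval_apply, ← MvPolynomial.coe_aeval_eq_eval, RingHom.coe_coe]
  congr 2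
  ext i
  simp

lemma totalDegree_finsetProd_le_card {ι : Type*} (s : Finset ι) (l : ι → MvPolynomial σ R)
    (hl : ∀ i ∈ s, (l i).totalDegree ≤ 1) : (∏ i ∈ s, l i).totalDegree ≤ s.card :=
  (MvPolynomial.totalDegree_finsetProd s l).trans <| by
    simpa only [smul_eq_mul, mul_one] using Finset.sum_le_card_nsmul s _ 1 hl

lemma totalDegree_C_mul_le (r : R) (q : MvPolynomial σ R) :
    (MvPolynomial.C r * q).totalDegree ≤ q.totalDegree := by
  rw [← MvPolynomial.smul_eq_C_mul]
  exact MvPolynomial.totalDegree_smul_le r q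

lemma totalDegree_X_le (i : σ) : (MvPolynomial.X i : MvPolynomial σ R).totalDegree ≤ 1 :=
  (MvPolynomial.totalDegree_monomial_le _ _).trans_eq (by simp)

lemma totalDegree_aeval_le_of_totalDegree_le_one {τ : Type*} (l : σ → MvPolynomial τ R)
    (hl : ∀ i, (l i).totalDegree ≤ 1) (q : MvPolynomial σ R) :
    (MvPolynomial.aeval l q).totalDegree ≤ q.totalDegree := by
  rw [MvPolynomial.aeval_eq_eval₂Hom, MvPolynomial.coe_eval₂Hom, MvPolynomial.eval₂_eq]
  refine MvPolynomial.totalDegree_finsetSum_le fun m hm => ?_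
  calc (MvPolynomial.C (q.coeff m) * ∏ i ∈ m.support, l i ^ m i).totalDegree
      ≤ (∏ i ∈ m.support, l i ^ m i).totalDegree := totalDegree_C_mul_le _ _
    _ ≤ ∑ i ∈ m.support, (l i ^ m i).totalDegree := MvPolynomial.totalDegree_finsetProd _ _
    _ ≤ ∑ i ∈ m.support, m i := Finset.sum_le_sum fun i _ =>
        (MvPolynomial.totalDegree_pow _ _).trans (mul_le_of_le_one_right' (hl i))
    _ ≤ q.totalDegree := MvPolynomial.le_totalDegree hm

lemma totalDegree_affineSubst_le (a : σ → R) (h : R) (q : MvPolynomial σ R) :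
    (affineSubst a h q).totalDegree ≤ q.totalDegree := by
  refine totalDegree_aeval_le_of_totalDegree_le_one _ (fun i => ?_) q
  refine (MvPolynomial.totalDegree_add _ _).trans (max_le ?_ ?_)
  · exact (MvPolynomial.totalDegree_C _).trans_le zero_le_one
  · exact (totalDegree_C_mul_le _ _).trans (totalDegree_X_le i)

end Substitution

section Diagonal

variable {R σ κ : Type*} [CommSemiring R] [Fintype σ] [DecidableEq σ] [Fintype κ] [DecidableEq κ]

/-- The homogeneous polynomial `v ↦ M (v, …, v)` attached to a multilinear form `M` on `R^σ`. -/
noncomputable def diagonalPolynomial (M : MultilinearMap R (fun _ : κ => σ → R) R) :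
    MvPolynomial σ R :=
  ∑ s : κ → σ, MvPolynomial.C (M fun j => Pi.single (s j) 1) * ∏ j, MvPolynomial.X (s j)

lemma eval_diagonalPolynomial (M : MultilinearMap R (fun _ : κ => σ → R) R) (v : σ → R) :
    MvPolynomial.eval v (diagonalPolynomial M) = M fun _ => v := by
  have hv : v = ∑ i, v i • Pi.single i 1 := pi_eq_sum_univ' v
  calc MvPolynomial.eval v (diagonalPolynomial M)
      = ∑ s : κ → σ, (∏ j, v (s j)) • M fun j => Pi.single (s j) 1 := by
        simp only [diagonalPolynomial, map_sum, map_mul, map_prod, MvPolynomial.eval_C,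
          MvPolynomial.eval_X, smul_eq_mul, mul_comm]
    _ = ∑ s : κ → σ, M fun j => v (s j) • Pi.single (s j) 1 := by
        simp only [M.map_smul_univ]
    _ = M fun _ => ∑ i, v i • Pi.single i 1 := (M.map_sum fun _ i => v i • Pi.single i 1).symm
    _ = M fun _ => v := by rw [← hv]

lemma totalDegree_diagonalPolynomial_le (M : MultilinearMap R (fun _ : κ => σ → R) R) :
    (diagonalPolynomial M).totalDegree ≤ Fintype.card κ :=
  MvPolynomial.totalDegree_finsetSum_le fun _ _ => (totalDegree_C_mul_le _ _).trans <|
    totalDegree_finsetProd_le_card _ _ fun _ _ => totalDegree_X_le _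

end Diagonal

section Taylor

variable {ι : Type*} [Fintype ι] [DecidableEq ι]

/-- The Taylor polynomial of degree `n` at `x` of `f` on `U`, as a polynomial in `u` rather than
in `u - x`. -/
noncomputable def taylorPolynomial (n : ℕ) (f : (ι → ℝ) → ℝ) (U : Set (ι → ℝ)) (x : ι → ℝ) :
    MvPolynomial ι ℝ :=
  ∑ k ∈ Finset.range (n + 1), MvPolynomial.C (k.factorial : ℝ)⁻¹ *
    affineSubst (-x) 1 (diagonalPolynomial (iteratedFDerivWithin ℝ k f U x).toMultilinearMap)

lemma eval_taylorPolynomial (n : ℕ) (f : (ι → ℝ) → ℝ) (U : Set (ι → ℝ)) (x u : ι → ℝ) :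
    MvPolynomial.eval u (taylorPolynomial n f U x) = ∑ k ∈ Finset.range (n + 1),
      (k.factorial : ℝ)⁻¹ * iteratedFDerivWithin ℝ k f U x (fun _ => u - x) := by
  simp only [taylorPolynomial, map_sum, map_mul, MvPolynomial.eval_C, eval_affineSubst,
    eval_diagonalPolynomial, one_smul, neg_add_eq_sub, ContinuousMultilinearMap.coe_coe]

lemma totalDegree_taylorPolynomial_le (n : ℕ) (f : (ι → ℝ) → ℝ) (U : Set (ι → ℝ)) (x : ι → ℝ) :
    (taylorPolynomial n f U x).totalDegree ≤ n := by
  refine MvPolynomial.totalDegree_finsetSum_le fun k hk => ?_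
  calc _ ≤ _ := totalDegree_C_mul_le _ _
    _ ≤ _ := totalDegree_affineSubst_le _ _ _
    _ ≤ Fintype.card (Fin k) := totalDegree_diagonalPolynomial_le _
    _ ≤ n := by simpa [Nat.lt_succ_iff] using hk

lemma abs_sub_eval_taylorPolynomial_le {n : ℕ} {f : (ι → ℝ) → ℝ} {U : Set (ι → ℝ)}
    {x u : ι → ℝ} {h L β : ℝ} (hL : 0 ≤ L) (hβ : 0 ≤ β) (hu : u ∈ Metric.closedBall x h)
    (hf : |f u - ∑ k ∈ Finset.range (n + 1), (k.factorial : ℝ)⁻¹ *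
      iteratedFDerivWithin ℝ k f U x (fun _ => u - x)| ≤ L * ‖u - x‖ ^ β) :
    |f u - MvPolynomial.eval u (taylorPolynomial n f U x)| ≤ L * h ^ β := by
  rw [eval_taylorPolynomial]
  refine hf.trans ?_
  gcongr
  exact mem_closedBall_iff_norm.1 hu

end Taylor

section NormEquivalence

open scoped ENNReal

theorem exists_norm_le_mul_norm_toLp {X E 𝕜 : Type*} [TopologicalSpace X] [CompactSpace X]
    [MeasurableSpace X] [BorelSpace X] (μ : Measure X) [IsFiniteMeasure μ] [μ.IsOpenPosMeasure]
    [NormedAddCommGroup E] [SecondCountableTopologyEither X E] [NontriviallyNormedField 𝕜]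
    [CompleteSpace 𝕜] [NormedSpace 𝕜 E] (r : ℝ≥0∞) [Fact (1 ≤ r)] (V : Submodule 𝕜 C(X, E))
    [FiniteDimensional 𝕜 V] :
    ∃ C : ℝ, 0 < C ∧ ∀ v ∈ V, ‖v‖ ≤ C * ‖ContinuousMap.toLp r μ 𝕜 v‖ := by
  let J : V →ₗ[𝕜] Lp E r μ := (ContinuousMap.toLp r μ 𝕜).toLinearMap ∘ₗ V.subtype
  have hJ : LinearMap.ker J = ⊥ :=
    LinearMap.ker_eq_bot.2 ((ContinuousMap.toLp_injective μ).comp Subtype.val_injective)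
  obtain ⟨C, hC, hanti⟩ := J.exists_antilipschitzWith hJ
  refine ⟨C, hC, fun v hv => ?_⟩
  simpa using! hanti.le_mul_dist ⟨v, hv⟩ 0

lemma isOpenPosMeasure_comap_subtype_val {X : Type*} [TopologicalSpace X] [MeasurableSpace X]
    (μ : Measure X) [μ.IsOpenPosMeasure] {K : Set X} (hKm : MeasurableSet K)
    (hK : K ⊆ closure (interior K)) :
    (μ.comap ((↑) : K → X)).IsOpenPosMeasure where
  open_pos := by
    rintro _ ⟨V, hV, rfl⟩ ⟨y, hy⟩
    rw [comap_subtype_coe_apply hKm, Subtype.image_preimage_coe]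
    have hVK : (V ∩ interior K).Nonempty := mem_closure_iff.mp (hK y.2) V hV hy
    refine ((hV.inter isOpen_interior).measure_pos μ hVK).trans_le (measure_mono ?_) |>.ne'
    exact fun w hw => ⟨interior_subset hw.2, hw.1⟩

theorem exists_eval_sq_le_mul_setIntegral {ι : Type*} [Finite ι] (p : ℕ) (μ : Measure (ι → ℝ))
    [IsFiniteMeasureOnCompacts μ] [μ.IsOpenPosMeasure] {K : Set (ι → ℝ)} (hKc : IsCompact K)
    (hK : K ⊆ closure (interior K)) :
    ∃ C : ℝ, 0 < C ∧ ∀ q : MvPolynomial ι ℝ, q.totalDegree ≤ p → ∀ t ∈ K,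
      MvPolynomial.eval t q ^ 2 ≤ C * ∫ u in K, MvPolynomial.eval u q ^ 2 ∂μ := by
  have : CompactSpace K := isCompact_iff_compactSpace.mp hKc
  have := isOpenPosMeasure_comap_subtype_val μ hKc.measurableSet hK
  have : IsFiniteMeasure (μ.comap ((↑) : K → ι → ℝ)) := ⟨by
    rw [comap_subtype_coe_apply hKc.measurableSet]
    simpa using hKc.measure_lt_top⟩
  let res : MvPolynomial ι ℝ →ₐ[ℝ] C(K, ℝ) :=
    MvPolynomial.aeval fun i => ⟨fun t => t.1 i, (continuous_apply i).comp continuous_subtype_val⟩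
  have res_apply (q : MvPolynomial ι ℝ) (t : K) : res q t = MvPolynomial.eval t.1 q :=
    MvPolynomial.comp_aeval_apply _ (ContinuousMap.evalAlgHom ℝ ℝ t) q
  obtain ⟨C, hC, hbound⟩ := exists_norm_le_mul_norm_toLp (μ.comap ((↑) : K → ι → ℝ)) 2
    ((MvPolynomial.restrictTotalDegree ι ℝ p).map res.toLinearMap)
  refine ⟨C ^ 2, by positivity, fun q hq t ht => ?_⟩
  have hnorm : ‖ContinuousMap.toLp 2 (μ.comap ((↑) : K → ι → ℝ)) ℝ (res q)‖ ^ 2 =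
      ∫ u in K, MvPolynomial.eval u q ^ 2 ∂μ := by
    rw [← real_inner_self_eq_norm_sq, ContinuousMap.inner_toLp,
      ← integral_subtype_comap hKc.measurableSet]
    simp [res_apply, sq]
  calc MvPolynomial.eval t q ^ 2 = ‖res q ⟨t, ht⟩‖ ^ 2 := by
        rw [res_apply, Real.norm_eq_abs, sq_abs]
    _ ≤ ‖res q‖ ^ 2 := by gcongr; exact (res q).norm_coe_le_norm _
    _ ≤ (C * ‖ContinuousMap.toLp 2 (μ.comap ((↑) : K → ι → ℝ)) ℝ (res q)‖) ^ 2 := by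
        gcongr
        exact hbound _ (Submodule.mem_map_of_mem
          ((MvPolynomial.mem_restrictTotalDegree _ _ _).2 hq))
    _ = C ^ 2 * ∫ u in K, MvPolynomial.eval u q ^ 2 ∂μ := by rw [mul_pow, hnorm]

end NormEquivalence

section Cube

variable {ι : Type*}

lemma add_smul_mem_cube_iff {a t : ι → ℝ} {h : ℝ} (hh : 0 < h) :
    a + h • t ∈ Set.Icc a (fun i => a i + h) ↔ t ∈ Set.Icc 0 1 := by
  simp [Pi.le_def, hh]

lemma exists_mem_cube_subset_box {a b x : ι → ℝ} {h : ℝ} (hab : ∀ i, a i + h ≤ b i)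
    (hh : 0 ≤ h) (hx : x ∈ Set.Icc a b) :
    ∃ a' : ι → ℝ, x ∈ Set.Icc a' (fun i => a' i + h) ∧
      Set.Icc a' (fun i => a' i + h) ⊆ Set.Icc a b := by
  refine ⟨fun i => max (a i) (x i - h), ⟨fun i => ?_, fun i => ?_⟩,
    Set.Icc_subset_Icc (fun i => le_max_left _ _) fun i => ?_⟩
  · exact max_le (hx.1 i) (by linarith)
  · linarith [le_max_right (a i) (x i - h)]
  · have := hab i
    have := hx.2 i
    rw [← max_add_add_right]
    exact max_le (by linarith) (by linarith)

lemma unitCube_subset_closure_interior [Finite ι] :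
    Set.Icc (0 : ι → ℝ) 1 ⊆ closure (interior (Set.Icc 0 1)) := by
  have hne : (interior (Set.Icc (0 : ι → ℝ) 1)).Nonempty := by
    rw [← Set.pi_univ_Icc, interior_pi_set Set.finite_univ]
    simp [Set.univ_pi_nonempty_iff]
  rw [(convex_Icc (𝕜 := ℝ) (0 : ι → ℝ) 1).closure_interior_eq_closure_of_nonempty_interior hne]
  exact subset_closure

variable [Fintype ι]

open scoped Pointwise in
lemma setIntegral_cube_eq (F : (ι → ℝ) → ℝ) (a : ι → ℝ) {h : ℝ} (hh : 0 < h) :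
    ∫ u in Set.Icc a (fun i => a i + h), F u =
      h ^ Fintype.card ι * ∫ t in Set.Icc (0 : ι → ℝ) 1, F (a + h • t) := by
  have hpre : (a + ·) ⁻¹' Set.Icc a (fun i => a i + h) = h • Set.Icc 0 1 := by
    ext v
    rw [Set.mem_smul_set_iff_inv_smul_mem₀ hh.ne', ← add_smul_mem_cube_iff hh,
      smul_inv_smul₀ hh.ne', Set.mem_preimage]
  rw [Measure.setIntegral_comp_smul_of_pos volume (fun v => F (a + v)) _ hh, ← hpre,
    (measurePreserving_add_left volume a).setIntegral_preimage_emb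
      (MeasurableEquiv.addLeft a).measurableEmbedding, Module.finrank_fintype_fun_eq_card,
    smul_eq_mul, mul_inv_cancel_left₀ (by positivity)]

theorem exists_eval_sq_le_mul_setIntegral_cube (ι : Type*) [Fintype ι] (p : ℕ) :
    ∃ C : ℝ, 0 < C ∧ ∀ q : MvPolynomial ι ℝ, q.totalDegree ≤ p → ∀ (a : ι → ℝ) (h : ℝ), 0 < h →
      ∀ x ∈ Set.Icc a (fun i => a i + h), h ^ Fintype.card ι * MvPolynomial.eval x q ^ 2 ≤
        C * ∫ u in Set.Icc a (fun i => a i + h), MvPolynomial.eval u q ^ 2 := by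
  obtain ⟨C, hC, hunit⟩ := exists_eval_sq_le_mul_setIntegral p volume
    (isCompact_Icc (a := (0 : ι → ℝ)) (b := 1)) unitCube_subset_closure_interior
  refine ⟨C, hC, fun q hq a h hh x hx => ?_⟩
  obtain ⟨t, rfl⟩ : ∃ t, x = a + h • t :=
    ⟨h⁻¹ • (x - a), by rw [smul_inv_smul₀ hh.ne', add_sub_cancel]⟩
  have hq' := hunit (affineSubst a h q) ((totalDegree_affineSubst_le a h q).trans hq) t
    ((add_smul_mem_cube_iff hh).1 hx)
  simp only [eval_affineSubst] at hq'
  rw [setIntegral_cube_eq _ a hh, mul_left_comm]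
  gcongr

lemma cube_subset_closedBall {a x : ι → ℝ} {h : ℝ} (hh : 0 ≤ h)
    (hx : x ∈ Set.Icc a (fun i => a i + h)) :
    Set.Icc a (fun i => a i + h) ⊆ Metric.closedBall x h := by
  intro u hu
  rw [Metric.mem_closedBall, dist_pi_le_iff hh]
  exact fun i => (Real.dist_le_of_mem_Icc ⟨hu.1 i, hu.2 i⟩ ⟨hx.1 i, hx.2 i⟩).trans_eq (by ring)

end Cube

theorem integral_sq_sub_le_of_least_squares {α : Type*} [MeasurableSpace α] {ν : Measure α}
    {f g T : α → ℝ} (hfT : MemLp (f - T) 2 ν) (hgT : MemLp (g - T) 2 ν)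
    (hmin : ∫ u, (f u - g u) ^ 2 ∂ν ≤ ∫ u, (f u - T u) ^ 2 ∂ν) :
    ∫ u, (g u - T u) ^ 2 ∂ν ≤ 4 * ∫ u, (f u - T u) ^ 2 ∂ν := by
  have hfg : MemLp (f - g) 2 ν := by simpa using hfT.sub hgT
  have hfT2 := hfT.integrable_sq
  have hfg2 := hfg.integrable_sq
  calc ∫ u, (g u - T u) ^ 2 ∂ν
      ≤ ∫ u, (2 * (f u - g u) ^ 2 + 2 * (f u - T u) ^ 2) ∂ν :=
        integral_mono hgT.integrable_sq ((hfg2.const_mul 2).add (hfT2.const_mul 2)) fun u => by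
          dsimp only [Pi.sub_apply]
          linarith [sq_nonneg ((f u - g u) + (f u - T u))]
    _ = 2 * ∫ u, (f u - g u) ^ 2 ∂ν + 2 * ∫ u, (f u - T u) ^ 2 ∂ν := by
        rw [← integral_const_mul, ← integral_const_mul]
        exact integral_add (hfg2.const_mul 2) (hfT2.const_mul 2)
    _ ≤ 4 * ∫ u, (f u - T u) ^ 2 ∂ν := by linarith

section Window

variable {ι : Type*} [Fintype ι]

/-- The measure `1{‖x - u‖ ≤ h} ρ(u) du` on `U` against which the local projection at `x`
minimizes the squared error. -/
noncomputable def windowMeasure (ρ : (ι → ℝ) → ℝ) (U : Set (ι → ℝ)) (x : ι → ℝ) (h : ℝ) :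
    Measure (ι → ℝ) :=
  (volume.restrict (U ∩ Metric.closedBall x h)).withDensity fun u => ENNReal.ofReal (ρ u)

variable {ρ : (ι → ℝ) → ℝ} {U Q : Set (ι → ℝ)} {x : ι → ℝ} {h m M : ℝ}

lemma integral_windowMeasure (hU : MeasurableSet U) (hρm : AEMeasurable ρ (volume.restrict U))
    (hρ0 : ∀ u ∈ U, 0 ≤ ρ u) (F : (ι → ℝ) → ℝ) :
    ∫ u, F u ∂windowMeasure ρ U x h = ∫ u in U, F u * (if ‖x - u‖ ≤ h then ρ u else 0) := by
  have hS : MeasurableSet (U ∩ Metric.closedBall x h) := hU.inter measurableSet_closedBall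
  calc ∫ u, F u ∂windowMeasure ρ U x h
      = ∫ u in U ∩ Metric.closedBall x h, (ENNReal.ofReal (ρ u)).toReal • F u :=
        integral_withDensity_eq_integral_toReal_smul₀
          (hρm.mono_set Set.inter_subset_left).ennreal_ofReal (by simp) F
    _ = ∫ u in U ∩ Metric.closedBall x h, F u * ρ u := setIntegral_congr_fun hS fun u hu => by
        rw [ENNReal.toReal_ofReal (hρ0 u hu.1), smul_eq_mul, mul_comm]
    _ = ∫ u in U, (Metric.closedBall x h).indicator (fun u => F u * ρ u) u :=
        (setIntegral_indicator measurableSet_closedBall).symm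
    _ = ∫ u in U, F u * (if ‖x - u‖ ≤ h then ρ u else 0) := by
        congr with u
        split_ifs with hu
        · exact Set.indicator_of_mem (mem_closedBall_iff_norm'.2 hu) _
        · rw [mul_zero]
          exact Set.indicator_of_notMem (mt mem_closedBall_iff_norm'.1 hu) _

lemma ae_windowMeasure_mem (hU : MeasurableSet U) :
    ∀ᵐ u ∂windowMeasure ρ U x h, u ∈ U ∩ Metric.closedBall x h :=
  (withDensity_absolutelyContinuous _ _).ae_le
    (ae_restrict_mem (hU.inter measurableSet_closedBall))

lemma windowMeasure_univ_le (hU : MeasurableSet U) (hρ : ∀ u ∈ U, ρ u ≤ M) (hh : 0 ≤ h) :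
    windowMeasure ρ U x h Set.univ ≤
      ENNReal.ofReal M * ENNReal.ofReal ((2 * h) ^ Fintype.card ι) := by
  rw [windowMeasure, withDensity_apply _ MeasurableSet.univ, Measure.restrict_univ]
  calc ∫⁻ u in U ∩ Metric.closedBall x h, ENNReal.ofReal (ρ u)
      ≤ ∫⁻ _ in U ∩ Metric.closedBall x h, ENNReal.ofReal M :=
        setLIntegral_mono' (hU.inter measurableSet_closedBall) fun u hu =>
          ENNReal.ofReal_le_ofReal (hρ u hu.1)
    _ = ENNReal.ofReal M * volume (U ∩ Metric.closedBall x h) := setLIntegral_const _ _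
    _ ≤ ENNReal.ofReal M * volume (Metric.closedBall x h) := by
        gcongr
        exact Set.inter_subset_right
    _ = _ := by rw [Real.volume_pi_closedBall x hh]

lemma smul_restrict_le_windowMeasure (hU : MeasurableSet U) (hQ : Q ⊆ U ∩ Metric.closedBall x h)
    (hρ : ∀ u ∈ U, m ≤ ρ u) :
    ENNReal.ofReal m • volume.restrict Q ≤ windowMeasure ρ U x h := by
  have hmono : (fun _ => ENNReal.ofReal m) ≤ᵐ[volume.restrict (U ∩ Metric.closedBall x h)]
      fun u => ENNReal.ofReal (ρ u) :=
    (ae_restrict_mem (hU.inter measurableSet_closedBall)).mono fun u hu =>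
      ENNReal.ofReal_le_ofReal (hρ u hu.1)
  calc ENNReal.ofReal m • volume.restrict Q
      ≤ ENNReal.ofReal m • volume.restrict (U ∩ Metric.closedBall x h) := by gcongr
    _ = (volume.restrict (U ∩ Metric.closedBall x h)).withDensity fun _ => ENNReal.ofReal m :=
        (withDensity_const _).symm
    _ ≤ windowMeasure ρ U x h := withDensity_mono hmono

lemma mul_setIntegral_le_integral_windowMeasure (hU : MeasurableSet U)
    (hQ : Q ⊆ U ∩ Metric.closedBall x h) (hm : 0 ≤ m) (hρ : ∀ u ∈ U, m ≤ ρ u)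
    {F : (ι → ℝ) → ℝ} (hF0 : 0 ≤ F) (hF : Integrable F (windowMeasure ρ U x h)) :
    m * ∫ u in Q, F u ≤ ∫ u, F u ∂windowMeasure ρ U x h := by
  have hmono := integral_mono_measure (smul_restrict_le_windowMeasure hU hQ hρ)
    (Filter.Eventually.of_forall hF0) hF
  rwa [integral_smul_measure, ENNReal.toReal_ofReal hm, smul_eq_mul] at hmono

lemma isFiniteMeasure_windowMeasure (hU : MeasurableSet U) (hρ : ∀ u ∈ U, ρ u ≤ M) (hh : 0 ≤ h) :
    IsFiniteMeasure (windowMeasure ρ U x h) :=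
  ⟨(windowMeasure_univ_le hU hρ hh).trans_lt
    (ENNReal.mul_lt_top ENNReal.ofReal_lt_top ENNReal.ofReal_lt_top)⟩

lemma aestronglyMeasurable_windowMeasure {F : (ι → ℝ) → ℝ}
    (hF : AEStronglyMeasurable F (volume.restrict U)) :
    AEStronglyMeasurable F (windowMeasure ρ U x h) :=
  (hF.mono_measure (Measure.restrict_mono Set.inter_subset_left le_rfl)).mono_ac
    (withDensity_absolutelyContinuous _ _)

lemma memLp_windowMeasure_of_continuous [IsFiniteMeasure (windowMeasure ρ U x h)]
    (hU : MeasurableSet U) {F : (ι → ℝ) → ℝ} (hF : Continuous F) (r : ENNReal) :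
    MemLp F r (windowMeasure ρ U x h) := by
  obtain ⟨B, hB⟩ :=
    (isCompact_closedBall x h).exists_bound_of_continuousOn (f := F) hF.continuousOn
  exact .of_bound hF.aestronglyMeasurable B ((ae_windowMeasure_mem hU).mono fun u hu => hB u hu.2)

lemma integral_sq_windowMeasure_le (hU : MeasurableSet U) (hM : 0 ≤ M) (hρ : ∀ u ∈ U, ρ u ≤ M)
    (hh : 0 ≤ h) {F : (ι → ℝ) → ℝ} {E : ℝ}
    (hF : ∀ u ∈ U ∩ Metric.closedBall x h, |F u| ≤ E) :
    ∫ u, F u ^ 2 ∂windowMeasure ρ U x h ≤ E ^ 2 * (M * (2 * h) ^ Fintype.card ι) := by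
  have := isFiniteMeasure_windowMeasure (x := x) hU hρ hh
  have hmass : (windowMeasure ρ U x h).real Set.univ ≤ M * (2 * h) ^ Fintype.card ι := by
    refine ENNReal.toReal_le_of_le_ofReal (by positivity) ?_
    rw [ENNReal.ofReal_mul hM]
    exact windowMeasure_univ_le hU hρ hh
  have hsq : ∀ᵐ u ∂windowMeasure ρ U x h, ‖F u ^ 2‖ ≤ E ^ 2 :=
    (ae_windowMeasure_mem hU).mono fun u hu => by
      rw [norm_pow, Real.norm_eq_abs]
      exact pow_le_pow_left₀ (abs_nonneg _) (hF u hu) 2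
  calc ∫ u, F u ^ 2 ∂windowMeasure ρ U x h
      ≤ E ^ 2 * (windowMeasure ρ U x h).real Set.univ :=
        (Real.le_norm_self _).trans (norm_integral_le_of_norm_le_const hsq)
    _ ≤ E ^ 2 * (M * (2 * h) ^ Fintype.card ι) := by gcongr

theorem exists_eval_sq_le_mul_integral_windowMeasure (ι : Type*) [Fintype ι] (p : ℕ) :
    ∃ C : ℝ, 0 < C ∧ ∀ (ρ : (ι → ℝ) → ℝ) (U : Set (ι → ℝ)) (a x : ι → ℝ) (h m M : ℝ),
      MeasurableSet U → 0 ≤ m → (∀ u ∈ U, m ≤ ρ u ∧ ρ u ≤ M) → 0 < h →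
      Set.Icc a (fun i => a i + h) ⊆ U → x ∈ Set.Icc a (fun i => a i + h) →
      ∀ q : MvPolynomial ι ℝ, q.totalDegree ≤ p →
        m * (h ^ Fintype.card ι * MvPolynomial.eval x q ^ 2) ≤
          C * ∫ u, MvPolynomial.eval u q ^ 2 ∂windowMeasure ρ U x h := by
  obtain ⟨C, hC, hcube⟩ := exists_eval_sq_le_mul_setIntegral_cube ι p
  refine ⟨C, hC, fun ρ U a x h m M hU hm hρ hh haU hx q hq => ?_⟩
  have := isFiniteMeasure_windowMeasure (x := x) hU (fun u hu => (hρ u hu).2) hh.le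
  have hq2 : Integrable (fun u => MvPolynomial.eval u q ^ 2) (windowMeasure ρ U x h) :=
    (memLp_windowMeasure_of_continuous hU (MvPolynomial.continuous_eval q) 2).integrable_sq
  calc m * (h ^ Fintype.card ι * MvPolynomial.eval x q ^ 2)
      ≤ m * (C * ∫ u in Set.Icc a (fun i => a i + h), MvPolynomial.eval u q ^ 2) :=
        mul_le_mul_of_nonneg_left (hcube q hq a h hh x hx) hm
    _ = C * (m * ∫ u in Set.Icc a (fun i => a i + h), MvPolynomial.eval u q ^ 2) :=
        mul_left_comm _ _ _
    _ ≤ C * ∫ u, MvPolynomial.eval u q ^ 2 ∂windowMeasure ρ U x h := by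
        gcongr
        exact mul_setIntegral_le_integral_windowMeasure hU
          (Set.subset_inter haU (cube_subset_closedBall hh.le hx)) hm (fun u hu => (hρ u hu).1)
          (fun u => sq_nonneg _) hq2

theorem exists_abs_eval_sub_le_of_least_squares (ι : Type*) [Fintype ι] (p : ℕ) (m M : ℝ)
    (hm : 0 < m) :
    ∃ K : ℝ, 0 ≤ K ∧ ∀ (ρ : (ι → ℝ) → ℝ) (U : Set (ι → ℝ)) (a x : ι → ℝ) (h : ℝ),
      MeasurableSet U → (∀ u ∈ U, m ≤ ρ u ∧ ρ u ≤ M) → 0 < h →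
      Set.Icc a (fun i => a i + h) ⊆ U → x ∈ Set.Icc a (fun i => a i + h) →
      ∀ f : (ι → ℝ) → ℝ, AEStronglyMeasurable f (volume.restrict U) →
      ∀ g T : MvPolynomial ι ℝ, g.totalDegree ≤ p → T.totalDegree ≤ p →
        ∫ u, (f u - MvPolynomial.eval u g) ^ 2 ∂windowMeasure ρ U x h ≤
          ∫ u, (f u - MvPolynomial.eval u T) ^ 2 ∂windowMeasure ρ U x h →
      ∀ E : ℝ, (∀ u ∈ U ∩ Metric.closedBall x h, |f u - MvPolynomial.eval u T| ≤ E) →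
        |MvPolynomial.eval x g - MvPolynomial.eval x T| ≤ K * E := by
  obtain ⟨C, hC, hnorm⟩ := exists_eval_sq_le_mul_integral_windowMeasure ι p
  refine ⟨√(C * 4 * M * 2 ^ Fintype.card ι / m), Real.sqrt_nonneg _, ?_⟩
  intro ρ U a x h hU hρ hh haU hx f hf g T hg hT hmin E hE
  have hM : 0 ≤ M := hm.le.trans ((hρ x (haU hx)).1.trans (hρ x (haU hx)).2)
  have hE0 : 0 ≤ E := (abs_nonneg _).trans (hE x ⟨haU hx, Metric.mem_closedBall_self hh.le⟩)
  have := isFiniteMeasure_windowMeasure (x := x) hU (fun u hu => (hρ u hu).2) hh.le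
  have hfT : MemLp (f - fun u => MvPolynomial.eval u T) 2 (windowMeasure ρ U x h) :=
    .of_bound ((aestronglyMeasurable_windowMeasure hf).sub
      (MvPolynomial.continuous_eval T).aestronglyMeasurable) E ((ae_windowMeasure_mem hU).mono hE)
  have hgT := memLp_windowMeasure_of_continuous (ρ := ρ) (x := x) (h := h) hU
    ((MvPolynomial.continuous_eval g).sub (MvPolynomial.continuous_eval T)) 2
  have hx_sq := hnorm ρ U a x h m M hU hm.le hρ hh haU hx (g - T)
    ((MvPolynomial.totalDegree_sub g T).trans (max_le hg hT))
  simp only [map_sub] at hx_sq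
  refine abs_le_of_sq_le_sq ?_ (by positivity)
  rw [mul_pow, Real.sq_sqrt (by positivity)]
  refine le_of_mul_le_mul_left ?_ (by positivity : 0 < m * h ^ Fintype.card ι)
  calc m * h ^ Fintype.card ι * (MvPolynomial.eval x g - MvPolynomial.eval x T) ^ 2
      ≤ C * ∫ u, (MvPolynomial.eval u g - MvPolynomial.eval u T) ^ 2 ∂windowMeasure ρ U x h :=
        (mul_assoc _ _ _).trans_le hx_sq
    _ ≤ C * (4 * ∫ u, (f u - MvPolynomial.eval u T) ^ 2 ∂windowMeasure ρ U x h) := by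
        gcongr
        exact integral_sq_sub_le_of_least_squares hfT hgT hmin
    _ ≤ C * (4 * (E ^ 2 * (M * (2 * h) ^ Fintype.card ι))) := by
        gcongr
        exact integral_sq_windowMeasure_le hU hM (fun u hu => (hρ u hu).2) hh.le hE
    _ = m * h ^ Fintype.card ι * (C * 4 * M * 2 ^ Fintype.card ι / m * E ^ 2) := by
        rw [mul_pow]
        field_simp

end Window

theorem projection_bias_bound_general (ι : Type*) [Fintype ι] (p : ℕ) (ρlo ρhi : ℝ)
    (hρlo : 0 < ρlo) :
    ∃ L₀ : ℝ, 0 < L₀ ∧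
      ∀ U : Set (ι → ℝ), MeasurableSet U →
      ∀ ρ : (ι → ℝ) → ℝ, AEMeasurable ρ (volume.restrict U) →
        (∀ u ∈ U, ρlo ≤ ρ u ∧ ρ u ≤ ρhi) →
      ∀ h : ℝ, 0 < h →
      ∀ f : (ι → ℝ) → ℝ, AEStronglyMeasurable f (volume.restrict U) →
      ∀ a : ι → ℝ, Set.Icc a (fun i => a i + h) ⊆ U →
      ∀ x ∈ Set.Icc a (fun i => a i + h),
      ∀ g : MvPolynomial ι ℝ, g.totalDegree ≤ p →
        (∀ q : MvPolynomial ι ℝ, q.totalDegree ≤ p →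
          ∫ u in U, (f u - MvPolynomial.eval u g) ^ 2 * (if ‖x - u‖ ≤ h then ρ u else 0)
            ≤ ∫ u in U, (f u - MvPolynomial.eval u q) ^ 2 * (if ‖x - u‖ ≤ h then ρ u else 0)) →
      ∀ T : MvPolynomial ι ℝ, T.totalDegree ≤ p →
      ∀ E : ℝ, (∀ u ∈ U ∩ Metric.closedBall x h, |f u - MvPolynomial.eval u T| ≤ E) →
        |MvPolynomial.eval x g - f x| ≤ L₀ * E := by
  obtain ⟨K, hK, hnear⟩ := exists_abs_eval_sub_le_of_least_squares ι p ρlo ρhi hρlo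
  refine ⟨K + 1, by positivity, fun U hU ρ hρm hρ h hh f hf a haU x hx g hg hmin T hT E hE => ?_⟩
  simp only [← integral_windowMeasure hU hρm fun u hu => hρlo.le.trans (hρ u hu).1] at hmin
  calc |MvPolynomial.eval x g - f x|
      ≤ |MvPolynomial.eval x g - MvPolynomial.eval x T| + |MvPolynomial.eval x T - f x| :=
        abs_sub_le _ _ _
    _ ≤ K * E + E := by
        gcongr
        · exact hnear ρ U a x h hU hρ hh haU hx f hf g T hg hT (hmin T hT) E hE
        · rw [abs_sub_comm]
          exact hE x ⟨haU hx, Metric.mem_closedBall_self hh.le⟩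
    _ = (K + 1) * E := by ring

/-- **Bias of the local `L²`-projection** (Part 4 of the paper's Lemma on the
`L²(P_X)`-projection). There is `L₀ > 0`, depending only on `p`, `d`, `ρ̲`, `ρ̄` and `L`,
such that for every axis-parallel cube `U` of side `s`, weight `ρ` with
`ρ̲ ≤ ρ ≤ ρ̄` on `U`, bandwidth `0 < h ≤ s`, function `f` in the Hölder class
`H_U(β, L)` with `0 < β ≤ p + 1` (with `n` the largest integer `< β`), point `x ∈ U`,
and any polynomial `g` of total degree at most `p` minimizing the kernel-weighted
least-squares criterion (box kernel, bandwidth `h`), one has `|g(x) − f(x)| ≤ L₀ h^β`. -/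
theorem projection_bias_bound (d p : ℕ) (hd : 1 ≤ d) (ρlo ρhi L : ℝ)
    (hρlo : 0 < ρlo) (hρ : ρlo ≤ ρhi) (hL : 0 < L) :
    ∃ L₀ : ℝ, 0 < L₀ ∧
      ∀ (β : ℝ) (n : ℕ), 0 < β → β ≤ (p : ℝ) + 1 → (n : ℝ) < β → β ≤ (n : ℝ) + 1 →
      ∀ (c : Fin d → ℝ) (s : ℝ), 0 < s →
      ∀ ρ : (Fin d → ℝ) → ℝ, Measurable ρ →
        (∀ u ∈ Set.Icc c (fun i => c i + s), ρlo ≤ ρ u ∧ ρ u ≤ ρhi) →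
      ∀ h : ℝ, 0 < h → h ≤ s →
      ∀ f : (Fin d → ℝ) → ℝ,
        ContDiffOn ℝ n f (Set.Icc c (fun i => c i + s)) →
        (∀ x ∈ Set.Icc c (fun i => c i + s), ∀ y ∈ Set.Icc c (fun i => c i + s),
          |f y - ∑ k ∈ Finset.range (n + 1), (k.factorial : ℝ)⁻¹ *
            iteratedFDerivWithin ℝ k f (Set.Icc c (fun i => c i + s)) x (fun _ => y - x)|
            ≤ L * ‖y - x‖ ^ β) →
      ∀ x ∈ Set.Icc c (fun i => c i + s),
      ∀ g : MvPolynomial (Fin d) ℝ, g.totalDegree ≤ p →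
        (∀ q : MvPolynomial (Fin d) ℝ, q.totalDegree ≤ p →
          ∫ u in Set.Icc c (fun i => c i + s),
              (f u - MvPolynomial.eval u g) ^ 2 * (if ‖x - u‖ ≤ h then ρ u else 0)
            ≤ ∫ u in Set.Icc c (fun i => c i + s),
              (f u - MvPolynomial.eval u q) ^ 2 * (if ‖x - u‖ ≤ h then ρ u else 0)) →
        |MvPolynomial.eval x g - f x| ≤ L₀ * h ^ β := by
  obtain ⟨K, hK, hbias⟩ := projection_bias_bound_general (Fin d) p ρlo ρhi hρlo
  refine ⟨K * L, mul_pos hK hL, ?_⟩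
  intro β n hβ hβp hnβ _ c s _ ρ hρm hρb h hh hhs f hf hTaylor x hx g hg hmin
  have hnp : n ≤ p := Nat.lt_succ_iff.mp (by exact_mod_cast hnβ.trans_le hβp)
  obtain ⟨a, hxa, haU⟩ := exists_mem_cube_subset_box (fun i => by gcongr) hh.le hx
  rw [mul_assoc]
  exact hbias _ measurableSet_Icc ρ hρm.aemeasurable hρb h hh f
    (hf.continuousOn.aestronglyMeasurable measurableSet_Icc) a haU x hxa g hg hmin
    (taylorPolynomial n f (Set.Icc c fun i => c i + s) x)
    ((totalDegree_taylorPolynomial_le n f _ x).trans hnp) (L * h ^ β)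
    fun u hu => abs_sub_eval_taylorPolynomial_le hL.le hβ.le hu.2 (hTaylor x hx u hu.1)
end

section
/- Let d ≥ 1, p ∈ ℕ and 0 < ρ̲ ≤ ρ̄. There exists κ₀ > 0, depending only on p, d, ρ̲ and ρ̄, with the following property. Let U ⊆ ℝ^d be a closed axis-parallel cube of side length s > 0, let ρ : U → ℝ be measurable with ρ̲ ≤ ρ(u) ≤ ρ̄ for all u ∈ U, let 0 < h ≤ s, and let f : U → [0,1] be measurable. Then for every x, x̂ ∈ U, every polynomial g_x of total degree at most p minimizing q ↦ ∫_U (f(u) − q(u))² · 1{‖x − u‖_∞ ≤ h} · ρ(u) du, and every polynomial g_{x̂} of total degree at most p minimizing q ↦ ∫_U (f(u) − q(u))² · 1{‖x̂ − u‖_∞ ≤ h} · ρ(u) du, one has |g_x(x) − g_{x̂}(x̂)| ≤ κ₀ · h^{−1} · ‖x − x̂‖_∞. -/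
open MeasureTheory

/-!
Polynomials of degree at most `p` form a finite-dimensional space, so on a cube of side `h` their
values and `h` times their Lipschitz constants are bounded by their root mean square over the cube,
with constants independent of `h` by rescaling. The window around `x` always contains a cube of side
`h` on which the density is at least `ρlo`; since projecting does not increase the `L²` norm, this
bounds the root mean square of the projection, which settles the case `‖x - x'‖ > h`.

For close points, let `r = g - g'`. The normal equations of both projections give
`∫_{B(x)} r² dP = ∫_{B(x)} (f - g') r dP - ∫_{B(x')} (f - g') r dP`, which only sees the symmetric
difference of the two windows. That set has volume `O(h^d · h⁻¹‖x - x'‖)`, and dividing by the root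
mean square of `r` leaves `|r| = O(h⁻¹‖x - x'‖)`.
-/

section

open Metric MvPolynomial
open scoped NNReal Pointwise symmDiff

theorem exists_abs_le_mul_norm_of_injective {V E κ : Type*} [AddCommGroup V] [Module ℝ V]
    [FiniteDimensional ℝ V] [NormedAddCommGroup E] [NormedSpace ℝ E] {L : V →ₗ[ℝ] E}
    (hL : Function.Injective L) {ℓ : κ → V →ₗ[ℝ] ℝ} (hℓ : ∀ v, ∃ C, ∀ k, |ℓ k v| ≤ C) :
    ∃ A > 0, ∀ k v, |ℓ k v| ≤ A * ‖L v‖ := by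
  let e := LinearEquiv.ofInjective L hL
  have : CompleteSpace L.range := FiniteDimensional.complete ℝ L.range
  obtain ⟨C, hC⟩ := banach_steinhaus
    (g := fun k => LinearMap.toContinuousLinearMap (ℓ k ∘ₗ e.symm.toLinearMap))
    fun w => hℓ (e.symm w)
  refine ⟨max C 1, by positivity, fun k v => ?_⟩
  simpa [e] using ContinuousLinearMap.le_of_opNorm_le _ ((hC k).trans (le_max_left C 1)) (e v)

theorem totalDegree_bind₁_le {σ τ R : Type*} [CommSemiring R] {F : σ → MvPolynomial τ R}
    (hF : ∀ i, (F i).totalDegree ≤ 1) (q : MvPolynomial σ R) :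
    (bind₁ F q).totalDegree ≤ q.totalDegree := by
  rw [bind₁, aeval_def, eval₂_eq]
  refine totalDegree_finsetSum_le fun m hm => ?_
  calc (algebraMap R (MvPolynomial τ R) (q.coeff m) * ∏ i ∈ m.support, F i ^ m i).totalDegree
      ≤ (C (σ := τ) (q.coeff m)).totalDegree + ∑ i ∈ m.support, (F i ^ m i).totalDegree :=
        (totalDegree_mul _ _).trans (by gcongr; exacts [le_rfl, totalDegree_finsetProd _ _])
    _ ≤ ∑ i ∈ m.support, m i := by
        rw [totalDegree_C, zero_add]
        gcongr with i
        exact (totalDegree_pow _ _).trans (mul_le_of_le_one_right' (hF i))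
    _ ≤ q.totalDegree := le_totalDegree hm

/-- The polynomial `u ↦ q (a + h • u)`: it turns statements about `q` on the cube `a + [0, h]^ι`
into statements on the unit cube. -/
noncomputable def rescale {σ : Type*} (a : σ → ℝ) (h : ℝ) (q : MvPolynomial σ ℝ) :
    MvPolynomial σ ℝ :=
  bind₁ (fun i => C (a i) + C h * X i) q

theorem eval_rescale {σ : Type*} (a : σ → ℝ) (h : ℝ) (q : MvPolynomial σ ℝ) (u : σ → ℝ) :
    eval u (rescale a h q) = eval (a + h • u) q := by
  rw [rescale, eval, eval₂Hom_bind₁]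
  congr 2
  ext i
  simp

theorem totalDegree_rescale_le {σ : Type*} (a : σ → ℝ) (h : ℝ) (q : MvPolynomial σ ℝ) :
    (rescale a h q).totalDegree ≤ q.totalDegree :=
  totalDegree_bind₁_le (fun _ => (totalDegree_add _ _).trans <|
    max_le (by simp) ((totalDegree_mul _ _).trans (by simp))) q

variable {ι : Type*}

theorem memLp_eval [Finite ι] {μ : Measure (ι → ℝ)} [IsFiniteMeasureOnCompacts μ] {K : Set (ι → ℝ)}
    (hK : IsCompact K) (r : ENNReal) (q : MvPolynomial ι ℝ) :
    MemLp (eval · q) r (μ.restrict K) := by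
  have : IsFiniteMeasure (μ.restrict K) := ⟨by simpa using hK.measure_lt_top⟩
  obtain ⟨C, hC⟩ := hK.exists_bound_of_continuousOn (continuous_eval q).continuousOn
  exact .of_bound (continuous_eval q).aestronglyMeasurable C
    (ae_restrict_of_forall_mem hK.measurableSet hC)

/-- The closed cube `a + [0, h]^ι` with lowest corner `a`. -/
abbrev cube (a : ι → ℝ) (h : ℝ) : Set (ι → ℝ) := Set.Icc a fun i => a i + h

theorem interior_cube_nonempty [Finite ι] (a : ι → ℝ) {h : ℝ} (hh : 0 < h) :
    (interior (cube a h)).Nonempty := by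
  rw [cube, ← Set.pi_univ_Icc, interior_pi_set Set.finite_univ]
  exact Set.univ_pi_nonempty_iff.2 fun i => by simpa using hh

variable [Fintype ι]

theorem eq_zero_of_ae_eval_eq_zero {q : MvPolynomial ι ℝ} {s : Set (ι → ℝ)}
    (hs : (interior s).Nonempty) (hq : ∀ᵐ u ∂volume.restrict s, eval u q = 0) : q = 0 := by
  obtain ⟨u₀, hu₀⟩ := hs
  have hzero : Set.EqOn (eval · q) 0 (interior s) :=
    Measure.eqOn_open_of_ae_eq (ae_restrict_of_ae_restrict_of_subset interior_subset hq)
      isOpen_interior (continuous_eval q).continuousOn continuousOn_const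
  have hanalytic := AnalyticOnNhd.eval_mvPolynomial q
  have hall := hanalytic.eqOn_zero_of_preconnected_of_eventuallyEq_zero isPreconnected_univ
    (Set.mem_univ u₀) (hzero.eventuallyEq_of_mem (isOpen_interior.mem_nhds hu₀))
  exact MvPolynomial.funext fun u => by simpa using hall (Set.mem_univ u)

theorem exists_lipschitzOnWith_eval {K : Set (ι → ℝ)} (hK : IsCompact K) (q : MvPolynomial ι ℝ) :
    ∃ C, LipschitzOnWith C (eval · q) K :=
  have hsmooth : ContDiff ℝ 1 (fun u : ι → ℝ => eval u q) :=
    contDiffOn_univ.1 (AnalyticOnNhd.eval_mvPolynomial q).contDiffOn_of_completeSpace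
  LocallyLipschitzOn.exists_lipschitzOnWith_of_compact hK
    hsmooth.locallyLipschitz.locallyLipschitzOn

/-- A polynomial, seen as an element of `L²` of Lebesgue measure on the compact set `K`. -/
noncomputable def evalL2 {K : Set (ι → ℝ)} (hK : IsCompact K) :
    MvPolynomial ι ℝ →ₗ[ℝ] Lp ℝ 2 (volume.restrict K) where
  toFun q := (memLp_eval hK 2 q).toLp
  map_add' q r := by
    rw [← MemLp.toLp_add]
    exact MemLp.toLp_congr _ _ (.of_forall fun u => by simp)
  map_smul' c q := by
    rw [RingHom.id_apply, ← MemLp.toLp_const_smul]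
    exact MemLp.toLp_congr _ _ (.of_forall fun u => by simp [smul_eval])

theorem norm_evalL2 {K : Set (ι → ℝ)} (hK : IsCompact K) (q : MvPolynomial ι ℝ) :
    ‖evalL2 hK q‖ = √(∫ u in K, eval u q ^ 2) := by
  rw [norm_eq_sqrt_real_inner, L2.inner_def]
  congr 1
  refine integral_congr_ae ?_
  filter_upwards [(memLp_eval hK 2 q).coeFn_toLp] with u hu
  change inner ℝ ((memLp_eval hK 2 q).toLp _ u) ((memLp_eval hK 2 q).toLp _ u) = _
  rw [hu, real_inner_self_eq_norm_sq, Real.norm_eq_abs, sq_abs]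

theorem evalL2_injective {K : Set (ι → ℝ)} (hK : IsCompact K) (hK' : (interior K).Nonempty) :
    Function.Injective (evalL2 hK) := by
  refine (injective_iff_map_eq_zero _).2 fun q hq => eq_zero_of_ae_eval_eq_zero hK' ?_
  filter_upwards [(memLp_eval hK 2 q).coeFn_toLp, (Lp.eq_zero_iff_ae_eq_zero.1 hq)] with u hu hu'
  exact hu.symm.trans hu'

theorem volume_real_cube (a : ι → ℝ) {h : ℝ} (hh : 0 ≤ h) :
    volume.real (cube a h) = h ^ Fintype.card ι := by
  rw [Measure.real, Real.volume_Icc_pi_toReal fun i => by simpa using hh]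
  simp

theorem setAverage_comp_affine_cube (a : ι → ℝ) {h : ℝ} (hh : 0 < h) (F : (ι → ℝ) → ℝ) :
    ⨍ u in cube 0 1, F (a + h • u) = ⨍ u in cube a h, F u := by
  have himage : h • cube (0 : ι → ℝ) 1 = (a + ·) ⁻¹' cube a h := by
    ext u
    simp [Set.mem_smul_set_iff_inv_smul_mem₀ hh.ne', Pi.le_def, inv_mul_le_iff₀ hh, hh]
  rw [setAverage_eq, setAverage_eq, volume_real_cube 0 zero_le_one, volume_real_cube a hh.le,
    Measure.setIntegral_comp_smul_of_pos volume (fun u => F (a + u)) _ hh, himage,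
    (measurePreserving_add_left volume a).setIntegral_preimage_emb (measurableEmbedding_addLeft a)]
  simp

/-- The root mean square of the polynomial function `q` over the cube `a + [0, h]^ι`. It is the
scale-invariant form of the `L²` norm in which polynomials are estimated. -/
noncomputable def cubeRMS (a : ι → ℝ) (h : ℝ) (q : MvPolynomial ι ℝ) : ℝ :=
  √(⨍ u in cube a h, eval u q ^ 2)

theorem cubeRMS_nonneg (a : ι → ℝ) (h : ℝ) (q : MvPolynomial ι ℝ) : 0 ≤ cubeRMS a h q :=
  Real.sqrt_nonneg _

theorem pow_card_mul_cubeRMS_sq (a : ι → ℝ) {h : ℝ} (hh : 0 < h) (q : MvPolynomial ι ℝ) :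
    h ^ Fintype.card ι * cubeRMS a h q ^ 2 = ∫ u in cube a h, eval u q ^ 2 := by
  rw [cubeRMS, setAverage_eq, volume_real_cube a hh.le, Real.sq_sqrt (by positivity), smul_eq_mul,
    mul_inv_cancel_left₀ (by positivity)]

theorem cubeRMS_rescale (a : ι → ℝ) {h : ℝ} (hh : 0 < h) (q : MvPolynomial ι ℝ) :
    cubeRMS 0 1 (rescale a h q) = cubeRMS a h q := by
  simp only [cubeRMS, eval_rescale]
  rw [setAverage_comp_affine_cube a hh fun u => eval u q ^ 2]

theorem norm_evalL2_unit_cube (q : MvPolynomial ι ℝ) :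
    ‖evalL2 (K := cube 0 1) isCompact_Icc q‖ = cubeRMS 0 1 q := by
  rw [norm_evalL2, ← pow_card_mul_cubeRMS_sq 0 one_pos, one_pow, one_mul,
    Real.sqrt_sq (cubeRMS_nonneg 0 1 q)]

theorem exists_abs_le_mul_cubeRMS_unit {κ : Type*} (p : ℕ) {ℓ : κ → MvPolynomial ι ℝ →ₗ[ℝ] ℝ}
    (hℓ : ∀ q, ∃ C, ∀ k, |ℓ k q| ≤ C) :
    ∃ A > 0, ∀ k (q : MvPolynomial ι ℝ), q.totalDegree ≤ p → |ℓ k q| ≤ A * cubeRMS 0 1 q := by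
  let V := restrictTotalDegree ι ℝ p
  have hinj : Function.Injective (evalL2 (K := cube (0 : ι → ℝ) 1) isCompact_Icc ∘ₗ V.subtype) :=
    (evalL2_injective isCompact_Icc (interior_cube_nonempty 0 one_pos)).comp V.injective_subtype
  obtain ⟨A, hA, hle⟩ :=
    exists_abs_le_mul_norm_of_injective hinj (ℓ := fun k => ℓ k ∘ₗ V.subtype) fun q => hℓ q
  refine ⟨A, hA, fun k q hq => ?_⟩
  simpa [norm_evalL2_unit_cube] using hle k ⟨q, (mem_restrictTotalDegree ι p q).2 hq⟩

theorem smul_sub_mem_closedBall {E : Type*} [NormedAddCommGroup E] [NormedSpace ℝ E] {a u : E}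
    {h R : ℝ} (hh : 0 < h) (hu : u ∈ closedBall a (R * h)) :
    h⁻¹ • (u - a) ∈ closedBall 0 R := by
  rw [mem_closedBall_iff_norm] at hu
  rw [mem_closedBall_zero_iff, norm_smul_of_nonneg (by positivity)]
  rwa [inv_mul_le_iff₀ hh, mul_comm]

theorem eval_rescale_inv_smul_sub {σ : Type*} (a u : σ → ℝ) {h : ℝ} (hh : h ≠ 0)
    (q : MvPolynomial σ ℝ) : eval (h⁻¹ • (u - a)) (rescale a h q) = eval u q := by
  rw [eval_rescale, smul_inv_smul₀ hh, add_sub_cancel]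

theorem exists_abs_eval_le_mul_cubeRMS (p : ℕ) (R : ℝ) :
    ∃ A > 0, ∀ q : MvPolynomial ι ℝ, q.totalDegree ≤ p → ∀ (a : ι → ℝ) (h : ℝ), 0 < h →
      ∀ u ∈ closedBall a (R * h), |eval u q| ≤ A * cubeRMS a h q := by
  obtain ⟨A, hA, hle⟩ := exists_abs_le_mul_cubeRMS_unit p
    (ℓ := fun u : closedBall (0 : ι → ℝ) R => (aeval (R := ℝ) u.1).toLinearMap) fun q => by
      obtain ⟨C, hC⟩ := (isCompact_closedBall 0 R).exists_bound_of_continuousOn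
        (continuous_eval q).continuousOn
      exact ⟨C, fun u => hC u u.2⟩
  refine ⟨A, hA, fun q hq a h hh u hu => ?_⟩
  have hunit := hle ⟨_, smul_sub_mem_closedBall hh hu⟩ (rescale a h q)
    ((totalDegree_rescale_le a h q).trans hq)
  simpa [coe_aeval_eq_eval, eval_rescale_inv_smul_sub a u hh.ne', cubeRMS_rescale a hh] using hunit

theorem exists_abs_eval_sub_eval_le_mul_cubeRMS (p : ℕ) (R : ℝ) :
    ∃ A > 0, ∀ q : MvPolynomial ι ℝ, q.totalDegree ≤ p → ∀ (a : ι → ℝ) (h : ℝ), 0 < h →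
      ∀ u ∈ closedBall a (R * h), ∀ v ∈ closedBall a (R * h),
        |eval u q - eval v q| ≤ A * cubeRMS a h q * (h⁻¹ * ‖u - v‖) := by
  let K := closedBall (0 : ι → ℝ) R
  -- The difference quotients of a polynomial on `K` are bounded by a Lipschitz constant.
  obtain ⟨A, hA, hle⟩ := exists_abs_le_mul_cubeRMS_unit p
    (ℓ := fun z : K × K => ‖z.1.1 - z.2.1‖⁻¹ •
      ((aeval (R := ℝ) z.1.1).toLinearMap - (aeval (R := ℝ) z.2.1).toLinearMap)) fun q => by
      obtain ⟨L, hL⟩ := exists_lipschitzOnWith_eval (isCompact_closedBall 0 R) q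
      refine ⟨L, fun z => ?_⟩
      have hz := hL.dist_le_mul z.1 z.1.2 z.2 z.2.2
      rw [Real.dist_eq, dist_eq_norm] at hz
      simpa [coe_aeval_eq_eval, abs_mul] using
        inv_mul_le_of_le_mul₀ (norm_nonneg _) L.coe_nonneg (hz.trans_eq (mul_comm _ _))
  refine ⟨A, hA, fun q hq a h hh u hu v hv => ?_⟩
  have hunit := hle (⟨_, smul_sub_mem_closedBall hh hu⟩, ⟨_, smul_sub_mem_closedBall hh hv⟩)
    (rescale a h q) ((totalDegree_rescale_le a h q).trans hq)
  rcases eq_or_ne u v with rfl | huv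
  · simp
  have hpos : 0 < h⁻¹ * ‖u - v‖ := by have := norm_pos_iff.2 (sub_ne_zero.2 huv); positivity
  rw [← div_le_iff₀ hpos, ← cubeRMS_rescale a hh]
  simpa [coe_aeval_eq_eval, eval_rescale_inv_smul_sub _ _ hh.ne', ← smul_sub, norm_smul, abs_mul,
    abs_of_pos hh, div_eq_inv_mul] using hunit

theorem integral_sub_mul_eq_zero_of_forall_integral_sq_le {α : Type*} [MeasurableSpace α]
    {μ : Measure α} {f g r : α → ℝ} (hf : MemLp f 2 μ) (hg : MemLp g 2 μ) (hr : MemLp r 2 μ)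
    (hmin : ∀ t : ℝ, ∫ u, (f u - g u) ^ 2 ∂μ ≤ ∫ u, (f u - (g u + t * r u)) ^ 2 ∂μ) :
    ∫ u, (f u - g u) * r u ∂μ = 0 := by
  have hfg : Integrable (fun u => (f u - g u) ^ 2) μ := (hf.sub hg).integrable_sq
  have hfgr : Integrable (fun u => (f u - g u) * r u) μ := (hf.sub hg).integrable_mul hr
  have hsub (t : ℝ) : Integrable (fun u => (f u - g u) ^ 2 - 2 * t * ((f u - g u) * r u)) μ :=
    hfg.sub (hfgr.const_mul _)
  have hquad (t : ℝ) : 0 ≤ (∫ u, r u ^ 2 ∂μ) * (t * t) +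
      (-2 * ∫ u, (f u - g u) * r u ∂μ) * t + 0 := by
    have hexpand : ∫ u, (f u - (g u + t * r u)) ^ 2 ∂μ = ∫ u, (f u - g u) ^ 2 ∂μ
        - 2 * t * ∫ u, (f u - g u) * r u ∂μ + t ^ 2 * ∫ u, r u ^ 2 ∂μ := by
      rw [← integral_const_mul, ← integral_const_mul, ← integral_sub hfg (hfgr.const_mul _),
        ← integral_add (hsub t) (hr.integrable_sq.const_mul _)]
      congr with u
      ring
    linarith [hmin t]
  have hdiscrim := discrim_le_zero hquad
  rw [discrim] at hdiscrim
  nlinarith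

theorem setIntegral_sub_setIntegral_le {α : Type*} [MeasurableSpace α] {μ : Measure α}
    {s t : Set α} (hs : MeasurableSet s) (ht : MeasurableSet t) (hs' : μ s ≠ ⊤) (ht' : μ t ≠ ⊤)
    {F : α → ℝ} (hFs : IntegrableOn F s μ) (hFt : IntegrableOn F t μ) {c : ℝ}
    (hc : ∀ᵐ u ∂μ, u ∈ s ∆ t → |F u| ≤ c) :
    ∫ u in s, F u ∂μ - ∫ u in t, F u ∂μ ≤ c * μ.real (s ∆ t) := by
  have hst : |∫ u in s \ t, F u ∂μ| ≤ c * μ.real (s \ t) :=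
    norm_setIntegral_le_of_norm_le_const_ae' (f := F)
      (measure_lt_top_of_subset Set.sdiff_subset hs') (hc.mono fun u hu h => hu (Or.inl h))
  have hts : |∫ u in t \ s, F u ∂μ| ≤ c * μ.real (t \ s) :=
    norm_setIntegral_le_of_norm_le_const_ae' (f := F)
      (measure_lt_top_of_subset Set.sdiff_subset ht') (hc.mono fun u hu h => hu (Or.inr h))
  rw [← integral_inter_add_sdiff ht hFs, ← integral_inter_add_sdiff hs hFt, Set.inter_comm t s,
    measureReal_symmDiff_eq hs ht, mul_add]
  linarith [le_of_abs_le hst, neg_le_of_abs_le hts]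

theorem volume_real_closedBall_pi (x : ι → ℝ) {r : ℝ} (hr : 0 ≤ r) :
    volume.real (closedBall x r) = (2 * r) ^ Fintype.card ι := by
  rw [Measure.real, Real.volume_pi_closedBall x hr, ENNReal.toReal_ofReal (by positivity)]

theorem volume_real_closedBall_sdiff_le (x y : ι → ℝ) {h : ℝ} (hxy : dist x y ≤ h) :
    volume.real (closedBall x h \ closedBall y h) ≤
      (2 * h) ^ Fintype.card ι * Fintype.card ι * (h⁻¹ * dist x y) := by
  rcases (dist_nonneg.trans hxy).eq_or_lt with rfl | hh
  · simp [dist_le_zero.1 hxy]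
  set d := Fintype.card ι
  have hsub : closedBall x (h - dist x y) ⊆ closedBall y h :=
    closedBall_subset_closedBall' (by simp)
  have hbernoulli : 1 - d * (h⁻¹ * dist x y) ≤ (1 - h⁻¹ * dist x y) ^ d := by
    have hle : h⁻¹ * dist x y ≤ 1 := (inv_mul_le_one₀ hh).2 hxy
    simpa [sub_eq_add_neg] using one_add_mul_le_pow (a := -(h⁻¹ * dist x y)) (by linarith) d
  have hradius : 2 * (h - dist x y) = 2 * h * (1 - h⁻¹ * dist x y) := by field_simp
  calc volume.real (closedBall x h \ closedBall y h)
      ≤ volume.real (closedBall x h \ closedBall x (h - dist x y)) :=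
        measureReal_mono (Set.sdiff_subset_sdiff_right hsub)
          (measure_lt_top_of_subset Set.sdiff_subset measure_closedBall_lt_top.ne).ne
    _ = (2 * h) ^ d - (2 * h * (1 - h⁻¹ * dist x y)) ^ d := by
        rw [measureReal_sdiff (closedBall_subset_closedBall (by simp)) measurableSet_closedBall
          measure_closedBall_lt_top.ne, volume_real_closedBall_pi x hh.le,
          volume_real_closedBall_pi x (sub_nonneg.2 hxy), hradius]
    _ = (2 * h) ^ d * (1 - (1 - h⁻¹ * dist x y) ^ d) := by rw [mul_pow (2 * h), mul_sub, mul_one]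
    _ ≤ (2 * h) ^ d * (d * (h⁻¹ * dist x y)) := by gcongr; linarith
    _ = (2 * h) ^ d * d * (h⁻¹ * dist x y) := by ring

theorem volume_real_closedBall_symmDiff_le (x y : ι → ℝ) {h : ℝ} (hxy : dist x y ≤ h) :
    volume.real (closedBall x h ∆ closedBall y h) ≤
      2 * ((2 * h) ^ Fintype.card ι * Fintype.card ι * (h⁻¹ * dist x y)) := by
  rw [measureReal_symmDiff_eq measurableSet_closedBall measurableSet_closedBall
    measure_closedBall_lt_top.ne measure_closedBall_lt_top.ne]
  have hxy' := volume_real_closedBall_sdiff_le x y hxy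
  have hyx' := volume_real_closedBall_sdiff_le y x (dist_comm x y ▸ hxy)
  rw [dist_comm y x] at hyx'
  linarith

/-- `g` is an `L²(P)`-projection `Γ_h^p f(x; ·)` for the box kernel: among the polynomials of total
degree at most `p` it minimizes the squared distance to `f` over the window `‖x - u‖_∞ ≤ h`. -/
structure IsLocalProjection (P : Measure (ι → ℝ)) (f : (ι → ℝ) → ℝ) (p : ℕ) (h : ℝ) (x : ι → ℝ)
    (g : MvPolynomial ι ℝ) : Prop where
  totalDegree_le : g.totalDegree ≤ p
  integral_sq_le : ∀ q : MvPolynomial ι ℝ, q.totalDegree ≤ p →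
    ∫ u in closedBall x h, (f u - eval u g) ^ 2 ∂P ≤ ∫ u in closedBall x h, (f u - eval u q) ^ 2 ∂P

section Projection

variable {P : Measure (ι → ℝ)} [IsFiniteMeasureOnCompacts P] {f : (ι → ℝ) → ℝ} {p : ℕ} {h : ℝ}
  {x : ι → ℝ} {g : MvPolynomial ι ℝ}

theorem IsLocalProjection.integral_sub_mul_eq_zero (hg : IsLocalProjection P f p h x g)
    (hf : MemLp f 2 (P.restrict (closedBall x h))) {r : MvPolynomial ι ℝ}
    (hr : r.totalDegree ≤ p) :
    ∫ u in closedBall x h, (f u - eval u g) * eval u r ∂P = 0 := by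
  have hK := isCompact_closedBall x h
  refine integral_sub_mul_eq_zero_of_forall_integral_sq_le hf (memLp_eval hK 2 g)
    (memLp_eval hK 2 r) fun t => ?_
  have hdeg : (g + C t * r).totalDegree ≤ p :=
    (totalDegree_add _ _).trans <| max_le hg.totalDegree_le <|
      (totalDegree_mul _ _).trans (by simpa using hr)
  simpa using hg.integral_sq_le _ hdeg

theorem integrableOn_sub_eval_mul_eval (hf : MemLp f 2 (P.restrict (closedBall x h)))
    (q r : MvPolynomial ι ℝ) :
    IntegrableOn (fun u => (f u - eval u q) * eval u r) (closedBall x h) P :=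
  have hL := memLp_eval (μ := P) (isCompact_closedBall x h) 2
  (hf.sub (hL q)).integrable_mul (hL r)

theorem IsLocalProjection.integral_eval_sq_le (hg : IsLocalProjection P f p h x g)
    (hf : MemLp f 2 (P.restrict (closedBall x h))) :
    ∫ u in closedBall x h, eval u g ^ 2 ∂P ≤ ∫ u in closedBall x h, f u ^ 2 ∂P := by
  have hgL := memLp_eval (μ := P) (isCompact_closedBall x h) 2 g
  have hfg := integrableOn_sub_eval_mul_eval hf g g
  calc ∫ u in closedBall x h, eval u g ^ 2 ∂P
      ≤ ∫ u in closedBall x h, (f u ^ 2 - 2 * ((f u - eval u g) * eval u g)) ∂P :=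
        integral_mono hgL.integrable_sq (hf.integrable_sq.sub (hfg.const_mul 2))
          fun u => by nlinarith [sq_nonneg (f u - eval u g)]
    _ = ∫ u in closedBall x h, f u ^ 2 ∂P := by
        rw [integral_sub hf.integrable_sq (hfg.const_mul 2), integral_const_mul,
          hg.integral_sub_mul_eq_zero hf hg.totalDegree_le, mul_zero, sub_zero]

theorem IsLocalProjection.integral_sub_sq_eq (hg : IsLocalProjection P f p h x g) {y : ι → ℝ}
    {g' : MvPolynomial ι ℝ} (hg' : IsLocalProjection P f p h y g')
    (hfx : MemLp f 2 (P.restrict (closedBall x h)))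
    (hfy : MemLp f 2 (P.restrict (closedBall y h))) :
    ∫ u in closedBall x h, eval u (g - g') ^ 2 ∂P =
      ∫ u in closedBall x h, (f u - eval u g') * eval u (g - g') ∂P -
        ∫ u in closedBall y h, (f u - eval u g') * eval u (g - g') ∂P := by
  have hdeg : (g - g').totalDegree ≤ p :=
    (totalDegree_sub _ _).trans (max_le hg.totalDegree_le hg'.totalDegree_le)
  have hint (q) := integrableOn_sub_eval_mul_eval hfx q (g - g')
  calc ∫ u in closedBall x h, eval u (g - g') ^ 2 ∂P
      = ∫ u in closedBall x h, ((f u - eval u g') * eval u (g - g') -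
          (f u - eval u g) * eval u (g - g')) ∂P := by
        congr with u
        simp only [map_sub]
        ring
    _ = _ := by
        rw [integral_sub (hint g') (hint g), hg.integral_sub_mul_eq_zero hfx hdeg,
          hg'.integral_sub_mul_eq_zero hfy hdeg]

theorem IsLocalProjection.integral_sub_sq_le (hg : IsLocalProjection P f p h x g) {y : ι → ℝ}
    {g' : MvPolynomial ι ℝ} (hg' : IsLocalProjection P f p h y g')
    (hfx : MemLp f 2 (P.restrict (closedBall x h)))
    (hfy : MemLp f 2 (P.restrict (closedBall y h))) {B D E : ℝ} (hfB : ∀ᵐ u ∂P, |f u| ≤ B)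
    (hD : ∀ u ∈ closedBall x h ∆ closedBall y h, |eval u g'| ≤ D)
    (hE : ∀ u ∈ closedBall x h ∆ closedBall y h, |eval u (g - g')| ≤ E) :
    ∫ u in closedBall x h, eval u (g - g') ^ 2 ∂P ≤
      (B + D) * E * P.real (closedBall x h ∆ closedBall y h) := by
  rw [hg.integral_sub_sq_eq hg' hfx hfy]
  refine setIntegral_sub_setIntegral_le measurableSet_closedBall measurableSet_closedBall
    (isCompact_closedBall x h).measure_ne_top (isCompact_closedBall y h).measure_ne_top
    (integrableOn_sub_eval_mul_eval hfx g' (g - g'))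
    (integrableOn_sub_eval_mul_eval hfy g' (g - g')) ?_
  filter_upwards [hfB] with u hu hmem
  have hresidual : |f u - eval u g'| ≤ B + D := (abs_sub _ _).trans (add_le_add hu (hD u hmem))
  rw [abs_mul]
  exact mul_le_mul hresidual (hE u hmem) (abs_nonneg _) ((abs_nonneg _).trans hresidual)

end Projection

theorem isFiniteMeasureOnCompacts_of_le {α : Type*} [TopologicalSpace α] [MeasurableSpace α]
    {μ ν : Measure α} [IsFiniteMeasureOnCompacts ν] (hle : μ ≤ ν) : IsFiniteMeasureOnCompacts μ :=
  ⟨fun K hK => (hle K).trans_lt hK.measure_lt_top⟩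

theorem measureReal_le_mul_of_le_smul {α : Type*} [MeasurableSpace α] {μ ν : Measure α} {c : ℝ≥0}
    (hle : μ ≤ c • ν) {s : Set α} (hs : ν s ≠ ⊤) : μ.real s ≤ c * ν.real s := by
  have hsmul : (c • ν) s ≠ ⊤ := ENNReal.mul_ne_top ENNReal.coe_ne_top hs
  calc μ.real s ≤ (c • ν).real s := ENNReal.toReal_mono hsmul (hle s)
    _ = c * ν.real s := by simp

/-- The law `P` has density at most `ρhi`, and density at least `ρlo` on some cube of side `h`
contained in the window of radius `h` around `x`. -/
structure IsRegularAt (ρlo ρhi : ℝ≥0) (P : Measure (ι → ℝ)) (h : ℝ) (x : ι → ℝ) : Prop where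
  le_smul_volume : P ≤ ρhi • volume
  exists_cube : ∃ a, cube a h ⊆ closedBall x h ∧ ρlo • volume.restrict (cube a h) ≤ P

theorem mul_cubeRMS_sq_le_setIntegral {P : Measure (ι → ℝ)} [IsFiniteMeasureOnCompacts P] {c : ℝ≥0}
    {a : ι → ℝ} {h : ℝ} (hh : 0 < h) (hle : c • volume.restrict (cube a h) ≤ P) {K : Set (ι → ℝ)}
    (hK : IsCompact K) (haK : cube a h ⊆ K) (q : MvPolynomial ι ℝ) :
    c * (h ^ Fintype.card ι * cubeRMS a h q ^ 2) ≤ ∫ u in K, eval u q ^ 2 ∂P := by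
  have hrestrict : c • volume.restrict (cube a h) ≤ P.restrict K := by
    calc c • volume.restrict (cube a h) = (c • volume.restrict (cube a h)).restrict K := by
          rw [Measure.restrict_smul, Measure.restrict_restrict hK.measurableSet,
            Set.inter_eq_right.2 haK]
      _ ≤ P.restrict K := Measure.restrict_mono_measure hle K
  rw [pow_card_mul_cubeRMS_sq a hh, ← smul_eq_mul, ← NNReal.smul_def,
    ← integral_smul_nnreal_measure]
  exact integral_mono_measure hrestrict (.of_forall fun u => sq_nonneg _)
    (memLp_eval hK 2 q).integrable_sq

theorem setIntegral_sq_le_of_ae_abs_le {α : Type*} [MeasurableSpace α] {μ : Measure α} {s : Set α}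
    (hs : μ s ≠ ⊤) {f : α → ℝ} {b : ℝ} (hfb : ∀ᵐ u ∂μ, |f u| ≤ b) :
    ∫ u in s, f u ^ 2 ∂μ ≤ b ^ 2 * μ.real s :=
  (le_abs_self _).trans <| norm_setIntegral_le_of_norm_le_const_ae' (f := fun u => f u ^ 2)
    hs.lt_top (hfb.mono fun u hu _ => by simpa using pow_le_pow_left₀ (abs_nonneg _) hu 2)

section Estimates

variable {P : Measure (ι → ℝ)} {ρlo ρhi B : ℝ≥0} {f : (ι → ℝ) → ℝ} {p : ℕ} {h : ℝ}
  {x y a : ι → ℝ} {g g' : MvPolynomial ι ℝ}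

theorem memLp_two_restrict_closedBall (hhi : P ≤ ρhi • volume) (hf : AEStronglyMeasurable f P)
    (hfB : ∀ᵐ u ∂P, |f u| ≤ B) (x : ι → ℝ) (h : ℝ) : MemLp f 2 (P.restrict (closedBall x h)) := by
  have := isFiniteMeasureOnCompacts_of_le hhi
  have : IsFiniteMeasure (P.restrict (closedBall x h)) :=
    ⟨by simpa using (isCompact_closedBall x h).measure_lt_top⟩
  exact .of_bound hf.restrict B (ae_restrict_of_ae hfB)

theorem IsLocalProjection.cubeRMS_le (hg : IsLocalProjection P f p h x g) (hh : 0 < h)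
    (hρlo : 0 < ρlo) (hax : cube a h ⊆ closedBall x h) (hlo : ρlo • volume.restrict (cube a h) ≤ P)
    (hhi : P ≤ ρhi • volume) (hf : AEStronglyMeasurable f P) (hfB : ∀ᵐ u ∂P, |f u| ≤ B) :
    cubeRMS a h g ≤ √(2 ^ Fintype.card ι * ρhi / ρlo) * B := by
  have := isFiniteMeasureOnCompacts_of_le hhi
  have hpos : 0 < h ^ Fintype.card ι * (ρlo : ℝ) := by positivity
  have henergy : h ^ Fintype.card ι * ρlo * cubeRMS a h g ^ 2 ≤
      h ^ Fintype.card ι * ρlo * (2 ^ Fintype.card ι * ρhi / ρlo * B ^ 2) := by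
    calc h ^ Fintype.card ι * ρlo * cubeRMS a h g ^ 2
        = ρlo * (h ^ Fintype.card ι * cubeRMS a h g ^ 2) := by ring
      _ ≤ ∫ u in closedBall x h, eval u g ^ 2 ∂P :=
          mul_cubeRMS_sq_le_setIntegral hh hlo (isCompact_closedBall x h) hax g
      _ ≤ ∫ u in closedBall x h, f u ^ 2 ∂P :=
          hg.integral_eval_sq_le (memLp_two_restrict_closedBall hhi hf hfB x h)
      _ ≤ B ^ 2 * P.real (closedBall x h) :=
          setIntegral_sq_le_of_ae_abs_le (isCompact_closedBall x h).measure_ne_top hfB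
      _ ≤ B ^ 2 * (ρhi * (2 * h) ^ Fintype.card ι) := by
          rw [← volume_real_closedBall_pi x hh.le]
          gcongr
          exact measureReal_le_mul_of_le_smul hhi measure_closedBall_lt_top.ne
      _ = _ := by rw [mul_pow]; field_simp
  rw [← Real.sqrt_sq B.coe_nonneg, ← Real.sqrt_mul (by positivity)]
  exact Real.le_sqrt_of_sq_le (le_of_mul_le_mul_left henergy hpos)

theorem IsLocalProjection.cubeRMS_sub_le (hg : IsLocalProjection P f p h x g)
    (hg' : IsLocalProjection P f p h y g') (hh : 0 < h) (hxy : dist x y ≤ h) (hρlo : 0 < ρlo)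
    (hax : cube a h ⊆ closedBall x h) (hlo : ρlo • volume.restrict (cube a h) ≤ P)
    (hhi : P ≤ ρhi • volume) (hf : AEStronglyMeasurable f P) (hfB : ∀ᵐ u ∂P, |f u| ≤ B)
    {A D : ℝ≥0} (hD : ∀ u ∈ closedBall x h ∆ closedBall y h, |eval u g'| ≤ D)
    (hA : ∀ u ∈ closedBall x h ∆ closedBall y h, |eval u (g - g')| ≤ A * cubeRMS a h (g - g')) :
    cubeRMS a h (g - g') ≤ (B + D) * A * ρhi * 2 * 2 ^ Fintype.card ι * Fintype.card ι / ρlo *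
      (h⁻¹ * dist x y) := by
  have := isFiniteMeasureOnCompacts_of_le hhi
  have hfL := memLp_two_restrict_closedBall hhi hf hfB
  rcases (cubeRMS_nonneg a h (g - g')).eq_or_lt with hzero | hpos
  · rw [← hzero]
    positivity
  set N := cubeRMS a h (g - g')
  have hscale : 0 < ρlo * h ^ Fintype.card ι * N := by positivity
  refine le_of_mul_le_mul_left ?_ hscale
  calc ρlo * h ^ Fintype.card ι * N * N
      = ρlo * (h ^ Fintype.card ι * N ^ 2) := by ring
    _ ≤ ∫ u in closedBall x h, eval u (g - g') ^ 2 ∂P :=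
        mul_cubeRMS_sq_le_setIntegral hh hlo (isCompact_closedBall x h) hax _
    _ ≤ (B + D) * (A * N) * P.real (closedBall x h ∆ closedBall y h) :=
        hg.integral_sub_sq_le hg' (hfL x h) (hfL y h) hfB hD hA
    _ ≤ (B + D) * (A * N) *
          (ρhi * (2 * ((2 * h) ^ Fintype.card ι * Fintype.card ι * (h⁻¹ * dist x y)))) := by
        gcongr
        refine (measureReal_le_mul_of_le_smul hhi ?_).trans ?_
        · exact measure_symmDiff_ne_top measure_closedBall_lt_top.ne measure_closedBall_lt_top.ne
        · gcongr
          exact volume_real_closedBall_symmDiff_le x y hxy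
    _ = _ := by
        rw [mul_pow]
        field_simp

theorem closedBall_two_mul_subset_of_cube_subset (hh : 0 ≤ h) (hax : cube a h ⊆ closedBall x h) :
    closedBall x (2 * h) ⊆ closedBall a (3 * h) := by
  have ha : a ∈ closedBall x h := hax (Set.left_mem_Icc.2 fun i => by simpa using hh)
  rw [mem_closedBall'] at ha
  exact closedBall_subset_closedBall' (by linarith)

end Estimates

theorem exists_bounds_on_double_window (p : ℕ) {ρlo ρhi : ℝ≥0} (hρlo : 0 < ρlo) :
    ∃ L : ℝ≥0, ∀ {P : Measure (ι → ℝ)} {f : (ι → ℝ) → ℝ} {B : ℝ≥0} {h : ℝ} {x : ι → ℝ}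
      {g : MvPolynomial ι ℝ}, AEStronglyMeasurable f P → (∀ᵐ u ∂P, |f u| ≤ B) → 0 < h →
      IsRegularAt ρlo ρhi P h x → IsLocalProjection P f p h x g →
      ∀ u ∈ closedBall x (2 * h), |eval u g| ≤ L * B ∧
        ∀ v ∈ closedBall x (2 * h), |eval u g - eval v g| ≤ L * B * (h⁻¹ * ‖u - v‖) := by
  obtain ⟨A₁, hA₁, hval⟩ := exists_abs_eval_le_mul_cubeRMS (ι := ι) p 3
  obtain ⟨A₂, -, hlip⟩ := exists_abs_eval_sub_eval_le_mul_cubeRMS (ι := ι) p 3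
  set A := max A₁ A₂
  set M := √(2 ^ Fintype.card ι * ρhi / ρlo)
  refine ⟨⟨A * M, by positivity⟩, fun {P f B h x g} hf hfB hh hP hg u hu => ?_⟩
  obtain ⟨a, hax, hlo⟩ := hP.exists_cube
  have hN : cubeRMS a h g ≤ M * B := hg.cubeRMS_le hh hρlo hax hlo hP.le_smul_volume hf hfB
  have hwindow := closedBall_two_mul_subset_of_cube_subset hh.le hax
  have hbound {c : ℝ} (hc : c ≤ A) : c * cubeRMS a h g ≤ A * M * B := by
    rw [mul_assoc]
    exact mul_le_mul hc hN (cubeRMS_nonneg a h g) (by positivity)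
  refine ⟨(hval g hg.totalDegree_le a h hh u (hwindow hu)).trans (hbound (le_max_left _ _)),
    fun v hv => (hlip g hg.totalDegree_le a h hh u (hwindow hu) v (hwindow hv)).trans ?_⟩
  exact mul_le_mul_of_nonneg_right (hbound (le_max_right _ _)) (by positivity)

theorem closedBall_symmDiff_subset {E : Type*} [PseudoMetricSpace E] {x y : E} {h : ℝ}
    (hxy : dist x y ≤ h) : closedBall x h ∆ closedBall y h ⊆ closedBall x (2 * h) :=
  symmDiff_le_sup.trans <| sup_le
    (closedBall_subset_closedBall (by linarith [dist_nonneg.trans hxy]))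
    (closedBall_subset_closedBall' (by linarith [dist_comm x y]))

theorem exists_abs_eval_sub_le_of_dist_le (p : ℕ) {ρlo ρhi : ℝ≥0} (hρlo : 0 < ρlo) :
    ∃ K : ℝ≥0, ∀ {P : Measure (ι → ℝ)} {f : (ι → ℝ) → ℝ} {B : ℝ≥0} {h : ℝ} {x x' : ι → ℝ}
      {g g' : MvPolynomial ι ℝ}, AEStronglyMeasurable f P → (∀ᵐ u ∂P, |f u| ≤ B) → 0 < h →
      IsRegularAt ρlo ρhi P h x → IsRegularAt ρlo ρhi P h x' →
      IsLocalProjection P f p h x g → IsLocalProjection P f p h x' g' → dist x x' ≤ h →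
      |eval x (g - g')| ≤ K * B * (h⁻¹ * dist x x') := by
  obtain ⟨A, hA, hval⟩ := exists_abs_eval_le_mul_cubeRMS (ι := ι) p 3
  obtain ⟨L, hL⟩ := exists_bounds_on_double_window (ι := ι) p (ρhi := ρhi) hρlo
  lift A to ℝ≥0 using hA.le
  let d := Fintype.card ι
  refine ⟨A * ((1 + L) * A * ρhi * 2 * 2 ^ d * d / ρlo),
    fun {P f B h x x' g g'} hf hfB hh hP hP' hg hg' hxx' => ?_⟩
  obtain ⟨a, hax, hlo⟩ := hP.exists_cube
  have hr : ∀ u ∈ closedBall x (2 * h), |eval u (g - g')| ≤ A * cubeRMS a h (g - g') :=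
    fun u hu => hval _ ((totalDegree_sub _ _).trans (max_le hg.totalDegree_le hg'.totalDegree_le))
      a h hh u (closedBall_two_mul_subset_of_cube_subset hh.le hax hu)
  have hg'B : ∀ u ∈ closedBall x h ∆ closedBall x' h, |eval u g'| ≤ (L * B : ℝ≥0) := fun u hu =>
    (hL hf hfB hh hP' hg' u (closedBall_symmDiff_subset (dist_comm x x' ▸ hxx')
      (symmDiff_comm (closedBall x h) _ ▸ hu))).1
  calc |eval x (g - g')| ≤ A * cubeRMS a h (g - g') :=
        hr x (mem_closedBall_self (by positivity))
    _ ≤ A * ((B + (L * B : ℝ≥0)) * A * ρhi * 2 * 2 ^ d * d / ρlo * (h⁻¹ * dist x x')) := by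
        gcongr
        exact hg.cubeRMS_sub_le hg' hh hxx' hρlo hax hlo hP.le_smul_volume hf hfB hg'B
          fun u hu => hr u (closedBall_symmDiff_subset hxx' hu)
    _ = _ := by
        push_cast
        ring

theorem projection_lipschitz_in_point_general (p : ℕ) {ρlo ρhi : ℝ≥0} (hρlo : 0 < ρlo) :
    ∃ κ₀ : ℝ, 0 < κ₀ ∧ ∀ {P : Measure (ι → ℝ)} {f : (ι → ℝ) → ℝ} {B : ℝ≥0} {h : ℝ} {x x' : ι → ℝ}
      {g g' : MvPolynomial ι ℝ}, AEStronglyMeasurable f P → (∀ᵐ u ∂P, |f u| ≤ B) → 0 < h →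
      IsRegularAt ρlo ρhi P h x → IsRegularAt ρlo ρhi P h x' →
      IsLocalProjection P f p h x g → IsLocalProjection P f p h x' g' →
      |eval x g - eval x' g'| ≤ κ₀ * B * (h⁻¹ * ‖x - x'‖) := by
  obtain ⟨L, hL⟩ := exists_bounds_on_double_window (ι := ι) p (ρhi := ρhi) hρlo
  obtain ⟨K, hK⟩ := exists_abs_eval_sub_le_of_dist_le (ι := ι) p (ρhi := ρhi) hρlo
  refine ⟨K + 2 * L + 1, by positivity,
    fun {P f B h x x' g g'} hf hfB hh hP hP' hg hg' => ?_⟩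
  have hx : x ∈ closedBall x (2 * h) := mem_closedBall_self (by positivity)
  have hx' : x' ∈ closedBall x' (2 * h) := mem_closedBall_self (by positivity)
  have hconst {c : ℝ} (hc : c ≤ K + 2 * L + 1) {t : ℝ} (ht : 0 ≤ t) :
      c * B * t ≤ (K + 2 * L + 1) * B * t := by gcongr
  rcases le_total (dist x x') h with hnear | hfar
  · have hxx' : x ∈ closedBall x' (2 * h) := mem_closedBall.2 (by linarith)
    calc |eval x g - eval x' g'|
        ≤ |eval x g - eval x g'| + |eval x g' - eval x' g'| := abs_sub_le _ _ _
      _ ≤ K * B * (h⁻¹ * ‖x - x'‖) + L * B * (h⁻¹ * ‖x - x'‖) := by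
          rw [← map_sub, ← dist_eq_norm]
          exact add_le_add (hK hf hfB hh hP hP' hg hg' hnear)
            (dist_eq_norm x x' ▸ (hL hf hfB hh hP' hg' x hxx').2 x' hx')
      _ = (K + L) * B * (h⁻¹ * ‖x - x'‖) := by ring
      _ ≤ _ := hconst (by linarith [L.coe_nonneg]) (by positivity)
  · calc |eval x g - eval x' g'| ≤ |eval x g| + |eval x' g'| := abs_sub _ _
      _ ≤ L * B + L * B := add_le_add (hL hf hfB hh hP hg x hx).1 (hL hf hfB hh hP' hg' x' hx').1
      _ = 2 * L * B * 1 := by ring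
      _ ≤ 2 * L * B * (h⁻¹ * ‖x - x'‖) := by
          gcongr
          rwa [← dist_eq_norm, le_inv_mul_iff₀ hh, mul_one]
      _ ≤ _ := hconst (by linarith [K.coe_nonneg]) (by positivity)

theorem exists_cube_subset_inter_closedBall {c x : ι → ℝ} {s h : ℝ} (hh : 0 ≤ h) (hhs : h ≤ s)
    (hx : x ∈ cube c s) : ∃ a, cube a h ⊆ cube c s ∩ closedBall x h := by
  refine ⟨fun i => max (c i) (x i - h), fun u hu => ⟨⟨fun i => ?_, fun i => ?_⟩, ?_⟩⟩
  · exact (le_max_left _ _).trans (hu.1 i)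
  · calc u i ≤ max (c i) (x i - h) + h := hu.2 i
      _ ≤ c i + s := by
        rw [max_add, sub_add_cancel]
        exact max_le (by linarith) (hx.2 i)
  · rw [mem_closedBall, dist_pi_le_iff hh]
    refine fun i => abs_sub_le_iff.2 ⟨?_, ?_⟩
    · have hupper : max (c i) (x i - h) ≤ x i := max_le (hx.1 i) (by linarith)
      linarith [hu.2 i]
    · linarith [(le_max_right _ _).trans (hu.1 i)]

/-- The measure `P_X` on `U` with Lebesgue density `ρ`, not assumed to be normalized; negative values
of `ρ` count as zero. -/
noncomputable def densityLaw (U : Set (ι → ℝ)) (ρ : (ι → ℝ) → ℝ) : Measure (ι → ℝ) :=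
  (volume.restrict U).withDensity fun u => ENNReal.ofReal (ρ u)

section DensityLaw

variable {U : Set (ι → ℝ)} {ρ : (ι → ℝ) → ℝ}

theorem ae_densityLaw_of_forall_mem (hU : MeasurableSet U) {φ : (ι → ℝ) → Prop}
    (hφ : ∀ u ∈ U, φ u) : ∀ᵐ u ∂densityLaw U ρ, φ u :=
  (withDensity_absolutelyContinuous _ _).ae_le (ae_restrict_of_forall_mem hU hφ)

theorem densityLaw_le_smul_volume (hU : MeasurableSet U) {b : ℝ} (hρ : ∀ u ∈ U, ρ u ≤ b) :
    densityLaw U ρ ≤ b.toNNReal • volume := by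
  calc densityLaw U ρ ≤ (volume.restrict U).withDensity fun _ => ENNReal.ofReal b :=
        withDensity_mono <| ae_restrict_of_forall_mem hU fun u hu =>
          ENNReal.ofReal_le_ofReal (hρ u hu)
    _ = b.toNNReal • volume.restrict U := withDensity_const _
    _ ≤ b.toNNReal • volume := by gcongr; exact Measure.restrict_le_self

theorem smul_restrict_le_densityLaw {Q : Set (ι → ℝ)} (hQ : MeasurableSet Q) (hQU : Q ⊆ U) {b : ℝ}
    (hρ : ∀ u ∈ Q, b ≤ ρ u) : b.toNNReal • volume.restrict Q ≤ densityLaw U ρ := by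
  calc b.toNNReal • volume.restrict Q
      = (volume.restrict Q).withDensity fun _ => ENNReal.ofReal b := (withDensity_const _).symm
    _ ≤ (volume.restrict Q).withDensity fun u => ENNReal.ofReal (ρ u) :=
        withDensity_mono <| ae_restrict_of_forall_mem hQ fun u hu =>
          ENNReal.ofReal_le_ofReal (hρ u hu)
    _ = (densityLaw U ρ).restrict Q := by
        rw [densityLaw, restrict_withDensity hQ, Measure.restrict_restrict hQ,
          Set.inter_eq_left.2 hQU]
    _ ≤ densityLaw U ρ := Measure.restrict_le_self

theorem setIntegral_densityLaw_closedBall (hU : MeasurableSet U) (hρ : Measurable ρ)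
    (hρ₀ : ∀ u ∈ U, 0 ≤ ρ u) (x : ι → ℝ) (h : ℝ) (F : (ι → ℝ) → ℝ) :
    ∫ u in closedBall x h, F u ∂densityLaw U ρ =
      ∫ u in U, F u * (if ‖x - u‖ ≤ h then ρ u else 0) := by
  rw [densityLaw, setIntegral_withDensity_eq_setIntegral_toReal_smul hρ.ennreal_ofReal
    (.of_forall fun _ => ENNReal.ofReal_lt_top) _ measurableSet_closedBall,
    ← integral_indicator measurableSet_closedBall]
  refine setIntegral_congr_fun hU fun u hu => ?_
  simp [Set.indicator, dist_eq_norm', ENNReal.toReal_ofReal (hρ₀ u hu), mul_comm]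

theorem isLocalProjection_densityLaw (hU : MeasurableSet U) (hρ : Measurable ρ)
    (hρ₀ : ∀ u ∈ U, 0 ≤ ρ u) {f : (ι → ℝ) → ℝ} {p : ℕ} {h : ℝ} {x : ι → ℝ} {g : MvPolynomial ι ℝ}
    (hg : g.totalDegree ≤ p) (hmin : ∀ q : MvPolynomial ι ℝ, q.totalDegree ≤ p →
      ∫ u in U, (f u - eval u g) ^ 2 * (if ‖x - u‖ ≤ h then ρ u else 0) ≤
        ∫ u in U, (f u - eval u q) ^ 2 * (if ‖x - u‖ ≤ h then ρ u else 0)) :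
    IsLocalProjection (densityLaw U ρ) f p h x g where
  totalDegree_le := hg
  integral_sq_le q hq := by
    simpa only [setIntegral_densityLaw_closedBall hU hρ hρ₀] using hmin q hq

theorem isRegularAt_densityLaw_cube {c x : ι → ℝ} {s h ρlo ρhi : ℝ} (hh : 0 ≤ h) (hhs : h ≤ s)
    (hρ : ∀ u ∈ cube c s, ρlo ≤ ρ u ∧ ρ u ≤ ρhi) (hx : x ∈ cube c s) :
    IsRegularAt ρlo.toNNReal ρhi.toNNReal (densityLaw (cube c s) ρ) h x where
  le_smul_volume := densityLaw_le_smul_volume measurableSet_Icc fun u hu => (hρ u hu).2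
  exists_cube := by
    obtain ⟨a, ha⟩ := exists_cube_subset_inter_closedBall hh hhs hx
    obtain ⟨hac, hax⟩ := Set.subset_inter_iff.1 ha
    exact ⟨a, hax, smul_restrict_le_densityLaw measurableSet_Icc hac fun u hu => (hρ u (hac hu)).1⟩

end DensityLaw

end

/-- **Lipschitz continuity of the local `L²`-projection in the evaluation point**
(Part 3 of the paper's Lemma on the `L²(P_X)`-projection). There is `κ₀ > 0`, depending
only on `p`, `d`, `ρ̲` and `ρ̄`, such that for every axis-parallel cube `U` of side `s`,
weight `ρ` with `ρ̲ ≤ ρ ≤ ρ̄` on `U`, bandwidth `0 < h ≤ s`, measurable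
`f : U → [0,1]`, points `x, x̂ ∈ U`, and minimizing polynomials `g_x` (at `x`) and
`g_x̂` (at `x̂`) of total degree at most `p` of the kernel-weighted least-squares
criterion, one has `|g_x(x) − g_x̂(x̂)| ≤ κ₀ h⁻¹ ‖x − x̂‖_∞`. -/
theorem projection_lipschitz_in_point (d p : ℕ) (hd : 1 ≤ d) (ρlo ρhi : ℝ)
    (hρlo : 0 < ρlo) (hρ : ρlo ≤ ρhi) :
    ∃ κ₀ : ℝ, 0 < κ₀ ∧
      ∀ (c : Fin d → ℝ) (s : ℝ), 0 < s →
      ∀ ρ : (Fin d → ℝ) → ℝ, Measurable ρ →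
        (∀ u ∈ Set.Icc c (fun i => c i + s), ρlo ≤ ρ u ∧ ρ u ≤ ρhi) →
      ∀ h : ℝ, 0 < h → h ≤ s →
      ∀ f : (Fin d → ℝ) → ℝ, Measurable f →
        (∀ u ∈ Set.Icc c (fun i => c i + s), f u ∈ Set.Icc (0 : ℝ) 1) →
      ∀ x ∈ Set.Icc c (fun i => c i + s), ∀ x' ∈ Set.Icc c (fun i => c i + s),
      ∀ gx : MvPolynomial (Fin d) ℝ, gx.totalDegree ≤ p →
        (∀ q : MvPolynomial (Fin d) ℝ, q.totalDegree ≤ p →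
          ∫ u in Set.Icc c (fun i => c i + s),
              (f u - MvPolynomial.eval u gx) ^ 2 * (if ‖x - u‖ ≤ h then ρ u else 0)
            ≤ ∫ u in Set.Icc c (fun i => c i + s),
              (f u - MvPolynomial.eval u q) ^ 2 * (if ‖x - u‖ ≤ h then ρ u else 0)) →
      ∀ gx' : MvPolynomial (Fin d) ℝ, gx'.totalDegree ≤ p →
        (∀ q : MvPolynomial (Fin d) ℝ, q.totalDegree ≤ p →
          ∫ u in Set.Icc c (fun i => c i + s),
              (f u - MvPolynomial.eval u gx') ^ 2 * (if ‖x' - u‖ ≤ h then ρ u else 0)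
            ≤ ∫ u in Set.Icc c (fun i => c i + s),
              (f u - MvPolynomial.eval u q) ^ 2 * (if ‖x' - u‖ ≤ h then ρ u else 0)) →
        |MvPolynomial.eval x gx - MvPolynomial.eval x' gx'| ≤ κ₀ * h⁻¹ * ‖x - x'‖ := by
  obtain ⟨κ₀, hκ₀, hlip⟩ := projection_lipschitz_in_point_general (ι := Fin d) p
    (ρhi := ρhi.toNNReal) (Real.toNNReal_pos.2 hρlo)
  refine ⟨κ₀, hκ₀, fun c s _ ρ hρm hρb h hh hhs f hf hf01 x hx x' hx' g hg hmin g' hg' hmin' => ?_⟩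
  have hρ₀ : ∀ u ∈ cube c s, 0 ≤ ρ u := fun u hu => hρlo.le.trans (hρb u hu).1
  have hfB : ∀ᵐ u ∂densityLaw (cube c s) ρ, |f u| ≤ (1 : NNReal) :=
    ae_densityLaw_of_forall_mem measurableSet_Icc fun u hu => by
      simpa [abs_of_nonneg (hf01 u hu).1] using (hf01 u hu).2
  have hbound := hlip hf.aestronglyMeasurable hfB hh
    (isRegularAt_densityLaw_cube hh.le hhs hρb hx) (isRegularAt_densityLaw_cube hh.le hhs hρb hx')
    (isLocalProjection_densityLaw measurableSet_Icc hρm hρ₀ hg hmin)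
    (isLocalProjection_densityLaw measurableSet_Icc hρm hρ₀ hg' hmin')
  simpa [mul_assoc] using hbound
end
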